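/- arXiv:2107.02379 — 5 statements merged into one kernel-verified Lean document; each statement's English description precedes it below -/
import Mathlib

section
/- Let G(V,E) be a chordal graph on V = {1,…,n} with maximal cliques C_1,…,C_t. Then a symmetric matrix Z ∈ S^n(E,0) is positive semidefinite (i.e., Z ∈ S^n_+(E,0)) if and only if there exist positive semidefinite matrices Z_k ∈ S^{|C_k|}_+, k = 1,…,t, such that Z = Σ_{k=1}^t E_{C_k}^T Z_k E_{C_k}. -/
/-!
If `Z` is a sum of terms `E_Cᵀ Z_k E_C` with `Z_k` positive semidefinite, it is positive
semidefinite by congruence. For the converse, the Cholesky algorithm on a chordal pattern, run in a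
perfect elimination order, produces no fill-in.

* Every nonempty vertex set `S` of a chordal graph contains a vertex `w` that is simplicial in `S`
  (`exists_simplicial`). This rests on the rooted version `exists_simplicial_nonadj`, proved by
  induction on `S`: given `v` and a non-neighbour `u`, let `K` be the component of `u` among the
  non-neighbours of `v` and `T` the neighbours of `v` attached to `K`. Two vertices of `T` are
  joined by a walk through non-neighbours of `v`, and a shortest such walk closed up through `v`
  would be a chordless cycle if they were not adjacent; so `T` is a clique, and the induction
  hypothesis for `K ∪ T` yields a simplicial vertex in `K`.
* Let `Z` be positive semidefinite and supported on `S`, and `z` its column at a simplicial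
  vertex `w`. Then `z` is supported on a clique, and `Z - z zᵀ / Z w w` is positive semidefinite,
  has the same sparsity pattern, and vanishes on row and column `w`. If `Z w w = 0` then `z = 0`
  and nothing has to be subtracted. Induction on `S` writes `Z` as a sum of matrices `z zᵀ` with
  each `z` supported on a clique (`mem_closure_cliqueRankOnes`).
* Each such clique lies in some maximal clique `C k`, and `z zᵀ = E_Cᵀ (E_C z)(E_C z)ᵀ E_C`; it
  remains to collect the terms belonging to the same `k`.
-/

open Finset Matrix

/-- The edge relation is symmetric. -/
def EdgeSymm {V : Type*} (E : V → V → Prop) : Prop := ∀ i j, E i j → E j i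

/-- Every vertex has a self-loop. -/
def HasSelfLoops {V : Type*} (E : V → V → Prop) : Prop := ∀ i, E i i

/-- A clique: a finite set of pairwise adjacent vertices. -/
def IsGraphClique {V : Type*} (E : V → V → Prop) (C : Finset V) : Prop :=
  ∀ i ∈ C, ∀ j ∈ C, E i j

/-- A maximal clique: a clique not properly contained in any other clique. -/
def IsMaximalGraphClique {V : Type*} (E : V → V → Prop) (C : Finset V) : Prop :=
  IsGraphClique E C ∧ ∀ D : Finset V, IsGraphClique E D → C ⊆ D → D = C

/-- Chordality: every cycle of length at least 4 (given by an injective map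
`c : Fin (k+4) → V` whose cyclically consecutive vertices are adjacent) has a chord,
i.e. an edge joining two distinct, nonconsecutive vertices of the cycle. -/
def IsChordalRel {V : Type*} (E : V → V → Prop) : Prop :=
  ∀ (k : ℕ) (c : Fin (k + 4) → V), Function.Injective c →
    (∀ i, E (c i) (c (i + 1))) →
    ∃ i j : Fin (k + 4), i ≠ j ∧ j ≠ i + 1 ∧ i ≠ j + 1 ∧ E (c i) (c j)

/-- `X ∈ S^n(E,0)`: symmetric with sparsity pattern `E`. -/
def HasSparsity {n : ℕ} (E : Fin n → Fin n → Prop) (X : Matrix (Fin n) (Fin n) ℝ) : Prop :=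
  X.IsSymm ∧ ∀ i j, ¬ E i j → X i j = 0

/-- The 0/1 matrix `E_C ∈ R^{|C| × n}` with `(E_C)_{ij} = 1` iff the `i`-th element of `C`
(in increasing order) equals `j`. -/
def cliqueMat {n : ℕ} (C : Finset (Fin n)) : Matrix (Fin C.card) (Fin n) ℝ :=
  Matrix.of fun i j => if (↑(C.orderIsoOfFin rfl i) : Fin n) = j then 1 else 0

/-- `X ∈ S^n_+(E,?)`: `X` admits a positive semidefinite completion. -/
def HasPSDCompletion {n : ℕ} (E : Fin n → Fin n → Prop) (X : Matrix (Fin n) (Fin n) ℝ) : Prop :=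
  ∃ Xb : Matrix (Fin n) (Fin n) ℝ, Xb.PosSemidef ∧ ∀ i j, E i j → Xb i j = X i j


/-! ### Simplicial vertices of chordal graphs -/

/-- `w` is simplicial in the subgraph induced by `S`: its neighbours inside `S` form a clique. -/
def IsSimplicialIn {V : Type*} (E : V → V → Prop) (S : Finset V) (w : V) : Prop :=
  w ∈ S ∧ ∀ a ∈ S, ∀ b ∈ S, E w a → E w b → E a b

/-- There is a walk of length `m` from `x` to `y` all of whose interior vertices lie in `U`. -/
def HasWalkThrough {V : Type*} (E : V → V → Prop) (U : V → Prop) (x y : V) (m : ℕ) : Prop :=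
  ∃ p : ℕ → V, p 0 = x ∧ p m = y ∧ (∀ i, 0 < i → i < m → U (p i)) ∧
    ∀ i < m, E (p i) (p (i + 1))

lemma HasWalkThrough.cons {V : Type*} {E : V → V → Prop} {U : V → Prop} {x a y : V} {m : ℕ}
    (h : HasWalkThrough E U a y m) (hxa : E x a) (ha : U a) :
    HasWalkThrough E U x y (m + 1) := by
  obtain ⟨p, h0, hm, hU, hE⟩ := h
  refine ⟨fun i => if i = 0 then x else p (i - 1), by simp, by simp [hm], ?_, ?_⟩
  · intro i hi him
    rcases i with _ | _ | i
    · omega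
    · simpa [h0] using ha
    · simpa using hU (i + 1) (by omega) (by omega)
  · intro i hi
    rcases i with _ | i
    · simpa [h0] using hxa
    · simpa using hE i (by omega)

/-- A shortcut edge `p i — p j` with `i + 1 < j` makes a walk strictly shorter. -/
lemma exists_shorter_walk {V : Type*} {E : V → V → Prop} {U : V → Prop} {m : ℕ} {p : ℕ → V}
    (hU : ∀ i, 0 < i → i < m → U (p i)) (hE : ∀ i < m, E (p i) (p (i + 1)))
    {i j : ℕ} (hij : i + 1 < j) (hj : j ≤ m) (h : E (p i) (p j)) :
    ∃ m' < m, HasWalkThrough E U (p 0) (p m) m' := by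
  refine ⟨m - (j - i - 1), by omega,
    fun l => if l ≤ i then p l else p (l + (j - i - 1)), by simp, ?_, ?_, ?_⟩
  · simp only
    rw [if_neg (by omega)]
    congr 1
    omega
  · intro l hl hlm
    simp only
    split_ifs
    · exact hU l hl (by omega)
    · exact hU _ (by omega) (by omega)
  · intro l hl
    simp only
    rcases lt_trichotomy l i with h1 | h1 | h1
    · rw [if_pos (by omega), if_pos (by omega)]
      exact hE l (by omega)
    · subst h1
      rw [if_pos le_rfl, if_neg (by omega)]
      convert h using 2
      omega
    · rw [if_neg (by omega), if_neg (by omega)]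
      convert hE (l + (j - i - 1)) (by omega) using 2
      omega

/-- In a chordal graph, two neighbours `x`, `y` of `v` joined by a walk through non-neighbours of
`v` are adjacent: otherwise a shortest such walk, closed up through `v`, is a chordless cycle. -/
lemma adj_of_walk_avoiding {V : Type*} {E : V → V → Prop} (hsymm : EdgeSymm E)
    (hloop : HasSelfLoops E) (hchordal : IsChordalRel E) {v x y : V} (hvx : E v x) (hvy : E v y)
    (hw : ∃ m, HasWalkThrough E (fun u => ¬ E v u) x y m) : E x y := by
  classical
  by_contra hxy
  have hmin := fun m' => Nat.find_min hw (m := m')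
  obtain ⟨p, h0, hm, hU, hE⟩ := Nat.find_spec hw
  generalize Nat.find hw = m at *
  -- a shortest walk is an induced path, up to the consecutive edges
  have hshort : ∀ i j, i + 1 < j → j ≤ m → ¬ E (p i) (p j) := by
    intro i j hij hj h
    obtain ⟨m', hm', hw'⟩ :=
      exists_shorter_walk (E := E) (U := fun u => ¬ E v u) hU hE hij hj h
    rw [h0, hm] at hw'
    exact hmin m' hm' hw'
  have hm2 : 2 ≤ m := by
    by_contra hlt
    rcases m with _ | _ | m
    · exact hxy (by rw [← h0, ← hm]; exact hloop _)
    · exact hxy (by rw [← h0, ← hm]; exact hE 0 (by omega))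
    · omega
  have hpinj : ∀ i j, i < j → j ≤ m → p i ≠ p j := by
    intro i j hij hj h
    have hj1 : ¬ i + 1 < j := fun hlt => hshort i j hlt hj (h ▸ hloop _)
    obtain rfl : j = i + 1 := by omega
    rcases i with _ | i
    · exact hshort 0 2 (by omega) hm2 (h ▸ hE 1 (by omega))
    · exact hshort i (i + 2) (by omega) hj (h ▸ hE i (by omega))
  have hvp : ∀ i, i ≤ m → E v (p i) → i = 0 ∨ i = m := by
    intro i hi h
    by_contra hne
    exact hU i (by omega) (by omega) h
  have hne : ∀ i, i ≤ m → p i ≠ v := by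
    intro i hi h
    rcases hvp i hi (h ▸ hloop _) with rfl | rfl
    · exact hxy (by rw [← h0, h]; exact hvy)
    · exact hxy (by rw [← hm, h]; exact hsymm _ _ hvx)
  obtain ⟨k, rfl⟩ : ∃ k, m = k + 2 := ⟨m - 2, by omega⟩
  have hval : ∀ i : Fin (k + 4),
      ((i + 1 : Fin (k + 4)) : ℕ) = if (i : ℕ) = k + 3 then 0 else (i : ℕ) + 1 := by
    intro i
    rw [Fin.val_add_one]
    simp [Fin.ext_iff]
  -- position `k + 3` of the cycle is `v`, the positions before it trace the walk
  obtain ⟨i, j, hij, hj1, hi1, hadj⟩ := hchordal k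
    (fun i => if (i : ℕ) ≤ k + 2 then p i else v)
    (by
      intro i j h
      simp only at h
      have hi := i.isLt
      have hj := j.isLt
      ext
      split_ifs at h with h1 h2 h2
      · rcases lt_trichotomy (i : ℕ) j with h3 | h3 | h3
        · exact absurd h (hpinj _ _ h3 h2)
        · exact h3
        · exact absurd h.symm (hpinj _ _ h3 h1)
      · exact absurd h (hne _ h1)
      · exact absurd h.symm (hne _ h2)
      · omega)
    (by
      intro i
      have hi := i.isLt
      have hv := hval i
      rcases lt_trichotomy (i : ℕ) (k + 2) with h1 | h1 | h1
      · rw [if_neg (by omega)] at hv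
        rw [hv, if_pos h1.le, if_pos (by omega)]
        exact hE _ h1
      · rw [if_neg (by omega)] at hv
        rw [hv, if_pos h1.le, if_neg (by omega), h1, hm]
        exact hsymm _ _ hvy
      · rw [if_pos (by omega)] at hv
        rw [hv, if_neg (by omega), if_pos (by omega), h0]
        exact hvx)
  -- a chord is either a shortcut of the walk or an edge from `v` to its interior
  have key : ∀ i j : Fin (k + 4), i < j → j ≠ i + 1 → i ≠ j + 1 →
      ¬ E (if (i : ℕ) ≤ k + 2 then p i else v) (if (j : ℕ) ≤ k + 2 then p j else v) := by
    intro i j hij hj1 hi1 hadj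
    rw [Ne, Fin.ext_iff, hval] at hj1 hi1
    have hj := j.isLt
    rw [Fin.lt_def] at hij
    rw [if_pos (by omega)] at hadj
    rw [if_neg (by omega)] at hj1
    split_ifs at hadj with h2
    · exact hshort _ _ (by omega) h2 hadj
    · rw [if_pos (by omega)] at hi1
      rcases hvp i (by omega) (hsymm _ _ hadj) with h | h <;> omega
  rcases lt_or_gt_of_ne hij with h | h
  · exact key i j h hj1 hi1 hadj
  · exact key j i h hi1 hj1 (hsymm _ _ hadj)

/-- Dirac's theorem in rooted form: a vertex `v` that is not adjacent to all of `S` has a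
non-neighbour that is simplicial in `S`. Passing to a connected component `K` of the
non-neighbours together with its attachment set `T`, a clique of neighbours of `v`, removes `v`
and keeps all neighbours of every vertex of `K`. -/
lemma exists_simplicial_nonadj {V : Type*} {E : V → V → Prop} (hsymm : EdgeSymm E)
    (hloop : HasSelfLoops E) (hchordal : IsChordalRel E) (S : Finset V) :
    ∀ v ∈ S, (∃ u ∈ S, ¬ E v u) → ∃ w, ¬ E v w ∧ IsSimplicialIn E S w := by
  classical
  induction S using Finset.strongInduction with
  | H S ih =>
  rintro v hv ⟨u, huS, hvu⟩
  let R : V → V → Prop := fun a b => E a b ∧ ¬ E v a ∧ (b ∈ S ∧ ¬ E v b)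
  let K : V → Prop := fun a => Relation.ReflTransGen R u a
  have hKS : ∀ a, K a → a ∈ S ∧ ¬ E v a := by
    intro a ha
    induction ha with
    | refl => exact ⟨huS, hvu⟩
    | tail _ h _ => exact h.2.2
  let T : V → Prop := fun x => E v x ∧ ∃ a, K a ∧ E a x
  have hnbr : ∀ w, K w → ∀ a ∈ S, E w a → K a ∨ T a := by
    intro w hw a ha hwa
    by_cases hva : E v a
    · exact Or.inr ⟨hva, w, hw, hwa⟩
    · exact Or.inl (hw.tail ⟨hwa, (hKS w hw).2, ha, hva⟩)
  have hTT : ∀ x y, T x → T y → E x y := by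
    rintro x y ⟨hvx, a, ha, hax⟩ ⟨hvy, b, hb, hby⟩
    -- concatenate `x — a`, a walk from `a` to `u` in `K`, one from `u` to `b`, and `b — y`;
    -- the walk is built backwards, starting from `y`
    have hback : ∀ c, K c → ∀ m, HasWalkThrough E (fun u => ¬ E v u) u y m →
        ∃ m, HasWalkThrough E (fun u => ¬ E v u) c y m := by
      intro c hc m hm
      induction hc with
      | refl => exact ⟨m, hm⟩
      | tail _ h ihc =>
        obtain ⟨m', hm'⟩ := ihc
        exact ⟨_, hm'.cons (hsymm _ _ h.1) h.2.1⟩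
    have hforth : ∃ m, HasWalkThrough E (fun u => ¬ E v u) u y m := by
      refine Relation.ReflTransGen.head_induction_on
        (motive := fun c _ => ∃ m, HasWalkThrough E (fun u => ¬ E v u) c y m) hb ?_ ?_
      · refine ⟨1, fun i => if i = 0 then b else y, by simp, by simp, ?_, ?_⟩
        · intro i h1 h2
          omega
        · intro i hi
          obtain rfl : i = 0 := by omega
          simpa using hby
      · rintro c d h _ ⟨m, hm⟩
        exact ⟨_, hm.cons h.1 h.2.2.2⟩
    obtain ⟨m, hm⟩ := hforth
    obtain ⟨m', hm'⟩ := hback a ha m hm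
    exact adj_of_walk_avoiding hsymm hloop hchordal hvx hvy
      ⟨_, hm'.cons (hsymm _ _ hax) (hKS a ha).2⟩
  let S' : Finset V := S.filter fun a => K a ∨ (T a ∧ a ≠ v)
  have hvT : ¬ T v := fun ⟨_, a, ha, hav⟩ => (hKS a ha).2 (hsymm _ _ hav)
  have hS'S : S' ⊂ S := by
    refine Finset.filter_ssubset.2 ⟨v, hv, ?_⟩
    rintro (h | h)
    · exact (hKS v h).2 (hloop v)
    · exact h.2 rfl
  have hmem : ∀ a, a ∈ S' ↔ a ∈ S ∧ (K a ∨ T a) := by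
    intro a
    simp only [S', Finset.mem_filter]
    refine and_congr_right fun _ => or_congr_right ⟨fun h => h.1, fun h => ⟨h, ?_⟩⟩
    rintro rfl
    exact hvT h
  have hlift : ∀ w, K w → IsSimplicialIn E S' w → ∃ w, ¬ E v w ∧ IsSimplicialIn E S w := by
    intro w hw hs
    refine ⟨w, (hKS w hw).2, (hKS w hw).1, fun a ha b hb hwa hwb => ?_⟩
    exact hs.2 a ((hmem a).2 ⟨ha, hnbr w hw a ha hwa⟩) b ((hmem b).2 ⟨hb, hnbr w hw b hb hwb⟩)
      hwa hwb
  by_cases hT : ∃ x ∈ S', T x ∧ ∃ z ∈ S', ¬ E x z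
  · obtain ⟨x, hxS, hxT, hz⟩ := hT
    obtain ⟨w, hxw, hs⟩ := ih S' hS'S x hxS hz
    refine hlift w ?_ hs
    exact ((hmem w).1 hs.1).2.resolve_right fun h => hxw (hTT _ _ hxT h)
  · push Not at hT
    by_cases hc : ∃ x ∈ S', ∃ z ∈ S', ¬ E x z
    · obtain ⟨x, hxS, hz⟩ := hc
      obtain ⟨w, hxw, hs⟩ := ih S' hS'S x hxS hz
      refine hlift w ?_ hs
      exact ((hmem w).1 hs.1).2.resolve_right fun h =>
        hxw (hsymm _ _ (hT w hs.1 h x hxS))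
    · push Not at hc
      exact hlift u Relation.ReflTransGen.refl
        ⟨(hmem u).2 ⟨huS, Or.inl Relation.ReflTransGen.refl⟩, fun a ha b hb _ _ => hc a ha b hb⟩

lemma exists_simplicial {V : Type*} {E : V → V → Prop} (hsymm : EdgeSymm E)
    (hloop : HasSelfLoops E) (hchordal : IsChordalRel E) {S : Finset V} (hS : S.Nonempty) :
    ∃ w, IsSimplicialIn E S w := by
  by_cases h : ∃ v ∈ S, ∃ u ∈ S, ¬ E v u
  · obtain ⟨v, hv, hu⟩ := h
    obtain ⟨w, -, hw⟩ := exists_simplicial_nonadj hsymm hloop hchordal S v hv hu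
    exact ⟨w, hw⟩
  · push Not at h
    obtain ⟨w, hw⟩ := hS
    exact ⟨w, hw, fun a ha b hb _ _ => h a ha b hb⟩

/-! ### Elimination in positive semidefinite matrices -/

lemma PosSemidef.isSymm_real {n : ℕ} {Z : Matrix (Fin n) (Fin n) ℝ} (hZ : Z.PosSemidef)
    (i j : Fin n) : Z i j = Z j i := by
  simpa using (hZ.isHermitian.apply i j).symm

lemma PosSemidef.row_eq_zero {n : ℕ} {Z : Matrix (Fin n) (Fin n) ℝ} (hZ : Z.PosSemidef)
    {w : Fin n} (hw : Z w w = 0) (i : Fin n) : Z i w = 0 := by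
  have h := (hZ.dotProduct_mulVec_zero_iff (Pi.single w 1)).1 (by simp [hw])
  simpa using congrFun h i

/-- Eliminating the pivot `w` keeps a matrix positive semidefinite. If `Z w w = 0` the subtracted
term is zero because `0⁻¹ = 0`. -/
lemma PosSemidef.eliminate {n : ℕ} {Z : Matrix (Fin n) (Fin n) ℝ} (hZ : Z.PosSemidef)
    (w : Fin n) : (Z - (Z w w)⁻¹ • vecMulVec (Z.col w) (Z.col w)).PosSemidef := by
  rcases eq_or_ne (Z w w) 0 with h0 | h0
  · simpa [h0] using hZ
  -- congruence by the elementary matrix that clears row and column `w`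
  let B : Matrix (Fin n) (Fin n) ℝ := 1 - (Z w w)⁻¹ • vecMulVec (Pi.single w 1) (Z.col w)
  have hB : Bᴴ * Z * B = Z - (Z w w)⁻¹ • vecMulVec (Z.col w) (Z.col w) := by
    have hrow : Z.row w = Z.col w := by
      ext i
      exact PosSemidef.isSymm_real hZ w i
    have hZB : Z * B = Z - (Z w w)⁻¹ • vecMulVec (Z.col w) (Z.col w) := by
      simp [B, mul_sub, mul_vecMulVec]
    have hBt : Bᴴ = 1 - (Z w w)⁻¹ • vecMulVec (Z.col w) (Pi.single w 1) := by
      simp [B]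
    rw [mul_assoc, hZB, hBt, sub_mul, one_mul]
    have : vecMulVec (Z.col w) (Pi.single w 1) * (Z - (Z w w)⁻¹ • vecMulVec (Z.col w) (Z.col w))
        = 0 := by
      rw [vecMulVec_mul]
      have : Pi.single w 1 ᵥ* (Z - (Z w w)⁻¹ • vecMulVec (Z.col w) (Z.col w)) = 0 := by
        ext j
        simp [vecMulVec_apply, PosSemidef.isSymm_real hZ w j]
        field_simp
        simp
      rw [this]
      ext
      simp [vecMulVec_apply]
    rw [smul_mul_assoc, this, smul_zero, sub_zero]
  rw [← hB]
  exact hZ.conjTranspose_mul_mul_same B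

/-- The rank-one positive semidefinite matrices `z zᵀ` with `z` supported on a clique of `E`. -/
def cliqueRankOnes {n : ℕ} (E : Fin n → Fin n → Prop) : Set (Matrix (Fin n) (Fin n) ℝ) :=
  {X | ∃ z : Fin n → ℝ, (∀ i j, z i ≠ 0 → z j ≠ 0 → E i j) ∧ X = vecMulVec z z}

/-- A positive semidefinite matrix with chordal pattern is a sum of rank-one terms supported on
cliques: eliminate simplicial vertices one at a time. Simpliciality makes each pivot column
supported on a clique, so that the elimination creates no fill-in. -/
lemma mem_closure_cliqueRankOnes {n : ℕ} {E : Fin n → Fin n → Prop} (hsymm : EdgeSymm E)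
    (hloop : HasSelfLoops E) (hchordal : IsChordalRel E) (S : Finset (Fin n)) :
    ∀ Z : Matrix (Fin n) (Fin n) ℝ, Z.PosSemidef →
      (∀ i j, Z i j ≠ 0 → E i j ∧ i ∈ S ∧ j ∈ S) →
      Z ∈ AddSubmonoid.closure (cliqueRankOnes E) := by
  induction S using Finset.strongInduction with
  | H S ih =>
  intro Z hZ hsupp
  rcases S.eq_empty_or_nonempty with rfl | hS
  · have : Z = 0 := by
      ext i j
      by_contra h
      simpa using (hsupp i j h).2.1
    rw [this]
    exact zero_mem _
  obtain ⟨w, hwS, hw⟩ := exists_simplicial hsymm hloop hchordal hS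
  have hcol : ∀ i j, Z i w ≠ 0 → Z j w ≠ 0 → E i j := fun i j hi hj =>
    hw i (hsupp i w hi).2.1 j (hsupp j w hj).2.1 (hsymm _ _ (hsupp i w hi).1)
      (hsymm _ _ (hsupp j w hj).1)
  have hsplit : Z = (Z - (Z w w)⁻¹ • vecMulVec (Z.col w) (Z.col w))
      + (Z w w)⁻¹ • vecMulVec (Z.col w) (Z.col w) := by simp
  have hentry : ∀ i j, (Z - (Z w w)⁻¹ • vecMulVec (Z.col w) (Z.col w)) i j
      = Z i j - (Z w w)⁻¹ * (Z i w * Z j w) := fun i j => by simp [vecMulVec_apply]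
  have hclear : ∀ i, Z i w - (Z w w)⁻¹ * (Z i w * Z w w) = 0 := by
    intro i
    rcases eq_or_ne (Z w w) 0 with h0 | h0
    · simp [PosSemidef.row_eq_zero hZ h0 i]
    · field_simp
      simp
  rw [hsplit]
  refine add_mem (ih (S.erase w) (Finset.erase_ssubset hwS) _ (PosSemidef.eliminate hZ w) ?_)
    (AddSubmonoid.subset_closure ?_)
  · intro i j hij
    rw [hentry] at hij
    have hiw : i ≠ w := by
      rintro rfl
      apply hij
      rw [PosSemidef.isSymm_real hZ i j, mul_comm (Z i i) (Z j i)]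
      exact hclear j
    have hjw : j ≠ w := by
      rintro rfl
      exact hij (hclear i)
    simp only [Finset.mem_erase]
    by_cases hZij : Z i j = 0
    · have hi : Z i w ≠ 0 := fun h => hij (by simp [hZij, h])
      have hj : Z j w ≠ 0 := fun h => hij (by simp [hZij, h])
      exact ⟨hcol i j hi hj, ⟨hiw, (hsupp i w hi).2.1⟩, hjw, (hsupp j w hj).2.1⟩
    · obtain ⟨h1, h2, h3⟩ := hsupp i j hZij
      exact ⟨h1, ⟨hiw, h2⟩, hjw, h3⟩
  · refine ⟨√(Z w w)⁻¹ • Z.col w, fun i j hi hj => ?_, ?_⟩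
    · exact hcol i j (fun h => hi (by simp [h])) (fun h => hj (by simp [h]))
    · rw [smul_vecMulVec, vecMulVec_smul, smul_smul,
        Real.mul_self_sqrt (inv_nonneg.2 hZ.diag_nonneg)]

/-! ### Inflation from maximal cliques -/

/-- `E_Cᵀ E_C`, the coordinate projection onto `C`, fixes vectors supported on `C`. -/
lemma cliqueMat_transpose_mulVec {n : ℕ} (C : Finset (Fin n)) {z : Fin n → ℝ}
    (hz : ∀ i, z i ≠ 0 → i ∈ C) : (cliqueMat C)ᵀ *ᵥ (cliqueMat C *ᵥ z) = z := by
  have h1 : cliqueMat C *ᵥ z = fun i => z (C.orderIsoOfFin rfl i) := by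
    ext i
    simp only [cliqueMat, mulVec, dotProduct, of_apply, ite_mul, one_mul, zero_mul]
    rw [Finset.sum_ite_eq, if_pos (Finset.mem_univ _)]
  ext j
  rw [h1]
  simp only [cliqueMat, mulVec, dotProduct, transpose_apply, of_apply, ite_mul, one_mul, zero_mul]
  refine ((C.orderIsoOfFin rfl).toEquiv.sum_comp
    (fun x : C => if (x : Fin n) = j then z x else 0)).trans ?_
  rw [Finset.sum_coe_sort C
    (fun x => if x = j then z x else 0), Finset.sum_ite_eq' C j z]
  split_ifs with h
  · rfl
  · by_contra hne
    exact h (hz j (Ne.symm hne))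

lemma exists_maximalClique_superset {n : ℕ} {E : Fin n → Fin n → Prop} {D : Finset (Fin n)}
    (hD : IsGraphClique E D) : ∃ M, IsMaximalGraphClique E M ∧ D ⊆ M := by
  obtain ⟨M, hDM, hM⟩ := (Set.toFinite {D | IsGraphClique E D}).exists_le_maximal hD
  exact ⟨M, ⟨hM.prop, fun F hF hMF => (hM.eq_of_le hF hMF).symm⟩, hDM⟩

/-- **Chordal decomposition (Agler–Griewank–Kakimura).**
If `G(V,E)` is chordal with maximal cliques `C 1, …, C t`, then a symmetric matrix
`Z ∈ S^n(E,0)` is positive semidefinite iff `Z = ∑ k, E_{C_k}ᵀ Z_k E_{C_k}` for some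
positive semidefinite `Z_k ∈ S^{|C_k|}_+`. -/
theorem chordal_decomposition {n t : ℕ} (E : Fin n → Fin n → Prop)
    (hsymm : EdgeSymm E) (hloop : HasSelfLoops E) (hchordal : IsChordalRel E)
    (C : Fin t → Finset (Fin n)) (hinj : Function.Injective C)
    (hmax : ∀ k, IsMaximalGraphClique E (C k))
    (hall : ∀ D : Finset (Fin n), IsMaximalGraphClique E D → ∃ k, C k = D)
    (Z : Matrix (Fin n) (Fin n) ℝ) (hZ : HasSparsity E Z) :
    Z.PosSemidef ↔
      ∃ Zk : (k : Fin t) → Matrix (Fin (C k).card) (Fin (C k).card) ℝ,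
        (∀ k, (Zk k).PosSemidef) ∧
        Z = ∑ k, (cliqueMat (C k))ᵀ * Zk k * cliqueMat (C k) := by
  classical
  constructor
  · intro hpsd
    have hmem := mem_closure_cliqueRankOnes hsymm hloop hchordal Finset.univ Z hpsd
      fun i j hij => ⟨by_contra fun h => hij (hZ.2 i j h), Finset.mem_univ _, Finset.mem_univ _⟩
    clear hpsd hZ
    -- decomposable matrices form an additive submonoid, so rank-one generators suffice
    induction hmem using AddSubmonoid.closure_induction with
    | mem X hX =>
      obtain ⟨z, hz, rfl⟩ := hX
      obtain ⟨M, hM, hzM⟩ := exists_maximalClique_superset (E := E)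
        (D := Finset.univ.filter fun i => z i ≠ 0)
        (fun i hi j hj => hz i j (by simpa using hi) (by simpa using hj))
      obtain ⟨k, rfl⟩ := hall M hM
      refine ⟨Pi.single k (vecMulVec (cliqueMat (C k) *ᵥ z) (cliqueMat (C k) *ᵥ z)), ?_, ?_⟩
      · intro l
        rcases eq_or_ne l k with rfl | hl
        · rw [Pi.single_eq_same]
          simpa using posSemidef_vecMulVec_self_star (cliqueMat (C l) *ᵥ z)
        · rw [Pi.single_eq_of_ne hl]
          exact PosSemidef.zero
      · rw [Finset.sum_eq_single k]
        · rw [Pi.single_eq_same, mul_vecMulVec, vecMulVec_mul, ← mulVec_transpose,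
            cliqueMat_transpose_mulVec (C k) fun i hi => hzM (by simpa using hi)]
        · intro l _ hl
          simp [Pi.single_eq_of_ne hl]
        · simp
    | zero => exact ⟨fun _ => 0, fun _ => PosSemidef.zero, by simp⟩
    | add X Y _ _ hX hY =>
      obtain ⟨A, hA, rfl⟩ := hX
      obtain ⟨B, hB, rfl⟩ := hY
      exact ⟨fun k => A k + B k, fun k => (hA k).add (hB k), by
        simp only [Matrix.mul_add, Matrix.add_mul, Finset.sum_add_distrib]⟩
  · rintro ⟨Zk, hpsd, rfl⟩
    refine posSemidef_sum _ fun k _ => ?_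
    simpa using (hpsd k).conjTranspose_mul_mul_same (cliqueMat (C k))
end

section
/- Let G(V,E) be a graph on V = {1,…,n} that is NOT chordal, with maximal cliques C_1,…,C_t. Then there exists a matrix Z ∈ S^n_+(E,0) that cannot be written as Z = Σ_{k=1}^t E_{C_k}^T Z_k E_{C_k} with positive semidefinite matrices Z_k ∈ S^{|C_k|}_+. -/
/-!
Let `c 0, …, c (m-1)` be a chordless cycle, `m = k + 4 ≥ 4`, and let `s i = 1`, except that
`s i = -1` on the edge that closes the cycle. The witness is the signed Laplacian of the cycle,
lowered at one diagonal entry,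
`Z = ∑ i, a i (a i)ᵀ - (4/m) e (c 0) (e (c 0))ᵀ`, with `a i = e (c i) - s i • e (c (i+1))`.
Since exactly one sign is negative, `∑ i, a i = 2 e (c 0)`, and Cauchy–Schwarz gives
`4 (x (c 0))² ≤ m ∑ i, (a i ⬝ x)²`, so `Z` is positive semidefinite (`cycleWitness_posSemidef`).

The separating functional is `φ(P) = ∑ i, (P (c i) (c i) + 2 s i P (c i) (c (i+1)))`. It vanishes on
each `a i (a i)ᵀ` and equals `1` on `e (c 0) (e (c 0))ᵀ`, whence
`φ(Z) = -4/m < 0` (`cycleFunctional_witness`). A clique contains at most one edge of a chordless cycle of length at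
least 4, so on a positive semidefinite matrix supported on a clique `φ` reduces to nonnegative
diagonal entries and at most one form `P u u + P v v ± 2 P u v`; thus `φ ≥ 0` there
(`cycleFunctional_nonneg`), and hence on every sum of such matrices.
-/

open Finset Matrix

/-- The sign of the cycle edge from `i` to `i + 1`: negative only on the edge returning to `0`. -/
def cycleSign {k : ℕ} (i : Fin (k + 4)) : ℝ := if i + 1 = 0 then -1 else 1

/-- The signed incidence vector `e (c i) - s i • e (c (i + 1))` of the `i`-th cycle edge. -/
def cycleVec {n k : ℕ} (c : Fin (k + 4) → Fin n) (i : Fin (k + 4)) : Fin n → ℝ :=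
  fun u => (if u = c i then 1 else 0) - cycleSign i * (if u = c (i + 1) then 1 else 0)

/-- The rank-one matrix `e (c 0) (e (c 0))ᵀ`. -/
def cycleCorner {n k : ℕ} (c : Fin (k + 4) → Fin n) : Matrix (Fin n) (Fin n) ℝ :=
  vecMulVec (fun u => if u = c 0 then 1 else 0) (fun u => if u = c 0 then 1 else 0)

/-- The signed Laplacian of the cycle, with `4 / m` subtracted from one diagonal entry, where
`m = k + 4` is the length of the cycle. -/
noncomputable def cycleWitness {n k : ℕ} (c : Fin (k + 4) → Fin n) : Matrix (Fin n) (Fin n) ℝ :=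
  ∑ i, vecMulVec (cycleVec c i) (cycleVec c i) - (4 / ((k : ℝ) + 4)) • cycleCorner c

/-- The functional `P ↦ ∑ i, (P (c i) (c i) + 2 s i P (c i) (c (i + 1)))`. -/
def cycleFunctional {n k : ℕ} (c : Fin (k + 4) → Fin n) :
    Matrix (Fin n) (Fin n) ℝ →ₗ[ℝ] ℝ where
  toFun P := ∑ i, (P (c i) (c i) + 2 * cycleSign i * P (c i) (c (i + 1)))
  map_add' P Q := by
    rw [← sum_add_distrib]
    exact sum_congr rfl fun i _ => by simp only [Matrix.add_apply]; ring
  map_smul' r P := by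
    simp only [Matrix.smul_apply, smul_eq_mul, RingHom.id_apply, mul_sum]
    exact sum_congr rfl fun i _ => by ring

lemma cycleSign_eq_one_or {k : ℕ} (i : Fin (k + 4)) : cycleSign i = 1 ∨ cycleSign i = -1 := by
  unfold cycleSign; split_ifs <;> simp

lemma cycleSign_mul_self {k : ℕ} (i : Fin (k + 4)) : cycleSign i * cycleSign i = 1 := by
  rcases cycleSign_eq_one_or i with h | h <;> simp [h]

lemma cycle_add_one_ne {k : ℕ} (i : Fin (k + 4)) : i + 1 ≠ i := by
  intro h
  have h1 : (1 : Fin (k + 4)) = 0 := add_eq_left.1 h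
  simp at h1

lemma cycle_add_two_ne {k : ℕ} (i : Fin (k + 4)) : i + 1 + 1 ≠ i := by
  intro h
  have h1 : (1 + 1 : Fin (k + 4)) = 0 := by
    rw [add_assoc] at h; simpa using h
  simp [Fin.ext_iff, Fin.val_add] at h1
  rw [Nat.mod_eq_of_lt (by omega)] at h1
  omega

lemma cycle_add_three_ne {k : ℕ} (i : Fin (k + 4)) : i + 1 + 1 + 1 ≠ i := by
  intro h
  have h1 : (1 + (1 + 1) : Fin (k + 4)) = 0 := by
    rw [add_assoc, add_assoc] at h; simpa using h
  simp [Fin.ext_iff, Fin.val_add] at h1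
  rw [Nat.mod_eq_of_lt (by omega)] at h1
  omega

/-- Tested against `x`, this is `∑ i, a i = 2 e (c 0)`: consecutive terms cancel, except at the
negative edge, where the two contributions to vertex `0` add up. -/
lemma sum_cycleSign_sub {k : ℕ} (y : Fin (k + 4) → ℝ) :
    ∑ i, (y i - cycleSign i * y (i + 1)) = 2 * y 0 := by
  have h : ∑ i : Fin (k + 4), cycleSign i * y (i + 1)
      = ∑ j : Fin (k + 4), (if j = 0 then -1 else 1) * y j :=
    Equiv.sum_comp (Equiv.addRight (1 : Fin (k + 4)))
      (fun j => (if j = 0 then (-1 : ℝ) else 1) * y j)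
  rw [sum_sub_distrib, h, ← sum_sub_distrib]
  have h2 : ∀ j : Fin (k + 4), y j - (if j = 0 then (-1 : ℝ) else 1) * y j
      = if j = 0 then 2 * y j else 0 := by
    intro j; split_ifs <;> ring
  rw [sum_congr rfl fun j _ => h2 j]
  simp

lemma cycleVec_dotProduct {n k : ℕ} (c : Fin (k + 4) → Fin n) (i : Fin (k + 4))
    (x : Fin n → ℝ) : cycleVec c i ⬝ᵥ x = x (c i) - cycleSign i * x (c (i + 1)) := by
  simp [cycleVec, dotProduct, sub_mul, sum_sub_distrib]

lemma quadForm_vecMulVec {n : ℕ} (v x : Fin n → ℝ) :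
    x ⬝ᵥ (vecMulVec v v *ᵥ x) = (v ⬝ᵥ x) ^ 2 := by
  rw [vecMulVec_mulVec, dotProduct_smul, dotProduct_comm x v]
  simp [sq]

lemma cycleWitness_isSymm {n k : ℕ} (c : Fin (k + 4) → Fin n) : (cycleWitness c).IsSymm := by
  ext u v
  simp [cycleWitness, cycleCorner, Matrix.sum_apply, vecMulVec_apply, mul_comm]

lemma cycleWitness_posSemidef {n k : ℕ} (c : Fin (k + 4) → Fin n) :
    (cycleWitness c).PosSemidef := by
  refine PosSemidef.of_dotProduct_mulVec_nonneg ?_ fun x => ?_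
  · rw [Matrix.IsHermitian, conjTranspose_eq_transpose_of_trivial]
    exact cycleWitness_isSymm c
  · have hc : x ⬝ᵥ (cycleCorner c *ᵥ x) = x (c 0) ^ 2 := by
      rw [cycleCorner, quadForm_vecMulVec]; simp [dotProduct]
    have hq : star x ⬝ᵥ (cycleWitness c *ᵥ x)
        = ∑ i, (x (c i) - cycleSign i * x (c (i + 1))) ^ 2
          - 4 / ((k : ℝ) + 4) * x (c 0) ^ 2 := by
      rw [star_trivial, cycleWitness, sub_mulVec, dotProduct_sub, smul_mulVec, dotProduct_smul,
        hc, sum_mulVec, dotProduct_sum]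
      simp [quadForm_vecMulVec, cycleVec_dotProduct]
    have hcs := sq_sum_le_card_mul_sum_sq (s := (univ : Finset (Fin (k + 4))))
      (f := fun i => x (c i) - cycleSign i * x (c (i + 1)))
    rw [sum_cycleSign_sub (fun i => x (c i))] at hcs
    simp only [card_univ, Fintype.card_fin, Nat.cast_add, Nat.cast_ofNat] at hcs
    have hk : (0 : ℝ) < (k : ℝ) + 4 := by positivity
    rw [hq, sub_nonneg, div_mul_eq_mul_div, div_le_iff₀ hk]
    linarith

lemma cycleWitness_sparse {n k : ℕ} {E : Fin n → Fin n → Prop} (hsymm : EdgeSymm E)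
    (hloop : HasSelfLoops E) (c : Fin (k + 4) → Fin n) (hc : ∀ i, E (c i) (c (i + 1)))
    (u v : Fin n) (huv : ¬ E u v) : cycleWitness c u v = 0 := by
  have h1 : ∀ i, cycleVec c i u * cycleVec c i v = 0 := by
    intro i
    by_contra h
    obtain ⟨hu, hv⟩ := mul_ne_zero_iff.1 h
    have key : ∀ w, cycleVec c i w ≠ 0 → w = c i ∨ w = c (i + 1) := by
      intro w hw
      by_contra! hne
      exact hw (by simp [cycleVec, hne.1, hne.2])
    rcases key u hu with rfl | rfl <;> rcases key v hv with rfl | rfl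
    exacts [huv (hloop _), huv (hc i), huv (hsymm _ _ (hc i)), huv (hloop _)]
  have h2 : cycleCorner c u v = 0 := by
    by_cases hu : u = c 0
    · have hv : v ≠ c 0 := by
        rintro rfl
        exact huv (hu ▸ hloop _)
      simp [cycleCorner, vecMulVec_apply, hv]
    · simp [cycleCorner, vecMulVec_apply, hu]
  simp [cycleWitness, Matrix.sum_apply, vecMulVec_apply, h1, h2]

lemma cycleFunctional_vecMulVec {n k : ℕ} {c : Fin (k + 4) → Fin n}
    (hinj : Function.Injective c) (i : Fin (k + 4)) :
    cycleFunctional c (vecMulVec (cycleVec c i) (cycleVec c i)) = 0 := by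
  have hterm : ∀ j : Fin (k + 4),
      cycleVec c i (c j) * cycleVec c i (c j)
        + 2 * cycleSign j * (cycleVec c i (c j) * cycleVec c i (c (j + 1)))
      = (if j = i then -1 else 0) + (if j = i + 1 then 1 else 0) := by
    intro j
    have hs := cycleSign_mul_self i
    by_cases h1 : j = i
    · subst h1
      simp only [cycleVec, hinj.eq_iff, cycle_add_one_ne, (cycle_add_one_ne j).symm, if_true,
        if_false]
      linear_combination -2 * hs
    · by_cases h2 : j = i + 1
      · subst h2
        simp only [cycleVec, hinj.eq_iff, cycle_add_one_ne, cycle_add_two_ne, if_true, if_false]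
        linear_combination hs
      · simp [cycleVec, hinj.eq_iff, h1, h2]
  simp only [cycleFunctional, LinearMap.coe_mk, AddHom.coe_mk, vecMulVec_apply, hterm]
  simp [sum_add_distrib]

lemma cycleFunctional_corner {n k : ℕ} {c : Fin (k + 4) → Fin n}
    (hinj : Function.Injective c) : cycleFunctional c (cycleCorner c) = 1 := by
  have hterm : ∀ j : Fin (k + 4),
      cycleCorner c (c j) (c j) + 2 * cycleSign j * cycleCorner c (c j) (c (j + 1))
      = if j = 0 then 1 else 0 := by
    intro j
    by_cases h : j = 0
    · subst h
      simp only [cycleCorner, vecMulVec_apply, hinj.eq_iff, cycle_add_one_ne, if_true, if_false]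
      ring
    · simp [cycleCorner, vecMulVec_apply, hinj.eq_iff, h]
  simp [cycleFunctional, hterm]

lemma cycleFunctional_witness {n k : ℕ} {c : Fin (k + 4) → Fin n}
    (hinj : Function.Injective c) : cycleFunctional c (cycleWitness c) = -(4 / ((k : ℝ) + 4)) := by
  rw [cycleWitness, map_sub, map_sum, map_smul, cycleFunctional_corner hinj]
  simp [cycleFunctional_vecMulVec hinj]

/-- The quadratic form of a positive semidefinite matrix at `e u + s • e v`, for `s = ±1`. -/
lemma posSemidef_pair_nonneg {n : ℕ} {P : Matrix (Fin n) (Fin n) ℝ} (hP : P.PosSemidef)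
    (u v : Fin n) {s : ℝ} (hs : s = 1 ∨ s = -1) : 0 ≤ P u u + P v v + 2 * s * P u v := by
  have h := hP.dotProduct_mulVec_nonneg (Pi.single u 1 + s • Pi.single v 1)
  have hsym : P v u = P u v := by simpa using hP.isHermitian.apply u v
  have hss : s * s = 1 := by rcases hs with rfl | rfl <;> norm_num
  simp only [star_trivial, mulVec_add, mulVec_smul, add_dotProduct, dotProduct_add,
    smul_dotProduct, dotProduct_smul, mulVec_single_one, single_one_dotProduct,
    col_apply, smul_eq_mul, hsym] at h
  linear_combination h + P v v * hss

/-- A clique contains at most one edge of a chordless cycle of length at least 4: two such edges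
would force a chord joining vertices at distance two. -/
lemma clique_cycle_edge_unique {n k : ℕ} {E : Fin n → Fin n → Prop} {c : Fin (k + 4) → Fin n}
    (hchord : ∀ i j : Fin (k + 4), E (c i) (c j) → i = j ∨ j = i + 1 ∨ i = j + 1)
    {K : Finset (Fin n)} (hK : IsGraphClique E K) {i j : Fin (k + 4)}
    (hi : c i ∈ K) (hi' : c (i + 1) ∈ K) (hj : c j ∈ K) (hj' : c (j + 1) ∈ K) : i = j := by
  have key : ∀ l : Fin (k + 4), c l ∈ K → c (l + 1 + 1) ∈ K → False := by
    intro l h1 h2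
    rcases hchord _ _ (hK _ h1 _ h2) with h | h | h
    · exact cycle_add_two_ne l h.symm
    · exact cycle_add_one_ne _ h
    · exact cycle_add_three_ne l h.symm
  rcases hchord _ _ (hK _ hi _ hj) with h | h | h
  · exact h
  · subst h; exact (key i hi hj').elim
  · subst h; exact (key j hj hi').elim

/-- `φ ≥ 0` on positive semidefinite matrices supported on a clique. -/
lemma cycleFunctional_nonneg {n k : ℕ} {E : Fin n → Fin n → Prop} {c : Fin (k + 4) → Fin n}
    (hchord : ∀ i j : Fin (k + 4), E (c i) (c j) → i = j ∨ j = i + 1 ∨ i = j + 1)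
    {K : Finset (Fin n)} (hK : IsGraphClique E K) {P : Matrix (Fin n) (Fin n) ℝ}
    (hP : P.PosSemidef) (hsupp : ∀ u v, P u v ≠ 0 → u ∈ K ∧ v ∈ K) :
    0 ≤ cycleFunctional c P := by
  change 0 ≤ ∑ i, (P (c i) (c i) + 2 * cycleSign i * P (c i) (c (i + 1)))
  have hdiag : ∀ u, 0 ≤ P u u := fun u => hP.diag_nonneg
  rw [sum_add_distrib]
  by_cases hex : ∃ i, P (c i) (c (i + 1)) ≠ 0
  · obtain ⟨i, hi⟩ := hex
    have hi2 := hsupp _ _ hi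
    have hsum : ∑ j, 2 * cycleSign j * P (c j) (c (j + 1))
        = 2 * cycleSign i * P (c i) (c (i + 1)) := by
      refine sum_eq_single i (fun j _ hji => ?_) (by simp)
      by_contra hne
      have hj2 := hsupp _ _ (right_ne_zero_of_mul hne)
      exact hji (clique_cycle_edge_unique hchord hK hj2.1 hj2.2 hi2.1 hi2.2)
    have hle : P (c i) (c i) + P (c (i + 1)) (c (i + 1)) ≤ ∑ j, P (c j) (c j) := by
      rw [← sum_pair (f := fun j => P (c j) (c j)) (cycle_add_one_ne i).symm]
      exact sum_le_sum_of_subset_of_nonneg (subset_univ _) fun j _ _ => hdiag _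
    have := posSemidef_pair_nonneg hP (c i) (c (i + 1)) (cycleSign_eq_one_or i)
    rw [hsum]
    linarith
  · push Not at hex
    simp only [hex, mul_zero, sum_const_zero, add_zero]
    exact sum_nonneg fun i _ => hdiag _

lemma cliqueMat_eq_zero {n : ℕ} {K : Finset (Fin n)} {u : Fin n} (hu : u ∉ K)
    (a : Fin K.card) : cliqueMat K a u = 0 := by
  simp only [cliqueMat, of_apply, ite_eq_right_iff]
  rintro rfl
  exact absurd (K.orderIsoOfFin rfl a).2 hu

lemma inflate_support {n : ℕ} {K : Finset (Fin n)} (Y : Matrix (Fin K.card) (Fin K.card) ℝ)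
    (u v : Fin n) (h : ((cliqueMat K)ᵀ * Y * cliqueMat K) u v ≠ 0) : u ∈ K ∧ v ∈ K := by
  by_contra hne
  refine h ?_
  rw [not_and_or] at hne
  rcases hne with hu | hv
  · simp [mul_apply, cliqueMat_eq_zero hu]
  · simp [mul_apply, cliqueMat_eq_zero hv]


/-- **Necessity of chordality.** If `G(V,E)` is NOT chordal, with maximal cliques
`C 1, …, C t`, then some `Z ∈ S^n_+(E,0)` admits no clique-based positive semidefinite
decomposition `Z = ∑ k, E_{C_k}ᵀ Z_k E_{C_k}`. -/
theorem nonchordal_no_decomposition {n t : ℕ} (E : Fin n → Fin n → Prop)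
    (hsymm : EdgeSymm E) (hloop : HasSelfLoops E) (hnotchordal : ¬ IsChordalRel E)
    (C : Fin t → Finset (Fin n)) (hinj : Function.Injective C)
    (hmax : ∀ k, IsMaximalGraphClique E (C k))
    (hall : ∀ D : Finset (Fin n), IsMaximalGraphClique E D → ∃ k, C k = D) :
    ∃ Z : Matrix (Fin n) (Fin n) ℝ, HasSparsity E Z ∧ Z.PosSemidef ∧
      ¬ ∃ Zk : (k : Fin t) → Matrix (Fin (C k).card) (Fin (C k).card) ℝ,
          (∀ k, (Zk k).PosSemidef) ∧
          Z = ∑ k, (cliqueMat (C k))ᵀ * Zk k * cliqueMat (C k) := by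
  unfold IsChordalRel at hnotchordal
  push Not at hnotchordal
  obtain ⟨k, c, hc, hcyc, hno⟩ := hnotchordal
  have hchord : ∀ i j : Fin (k + 4), E (c i) (c j) → i = j ∨ j = i + 1 ∨ i = j + 1 := by
    intro i j hij
    by_contra! h
    exact hno i j h.1 h.2.1 h.2.2 hij
  refine ⟨cycleWitness c, ⟨cycleWitness_isSymm c, cycleWitness_sparse hsymm hloop c hcyc⟩,
    cycleWitness_posSemidef c, ?_⟩
  rintro ⟨Zk, hZk, hZ⟩
  have hneg := cycleFunctional_witness hc
  rw [hZ, map_sum] at hneg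
  have hpos : 0 ≤ ∑ l, cycleFunctional c ((cliqueMat (C l))ᵀ * Zk l * cliqueMat (C l)) := by
    refine sum_nonneg fun l _ => cycleFunctional_nonneg hchord (hmax l).1 ?_ (inflate_support _)
    simpa using (hZk l).conjTranspose_mul_mul_same (cliqueMat (C l))
  have hk : (0 : ℝ) < 4 / ((k : ℝ) + 4) := by positivity
  linarith
end

section
/- Let G(V,E) be a chordal graph on V = {1,…,n} with maximal cliques C_1,…,C_t. Then a matrix X ∈ S^n(E,0) admits a positive semidefinite completion (i.e., X ∈ S^n_+(E,?)) if and only if E_{C_k} X E_{C_k}^T ∈ S^{|C_k|}_+ for every k = 1,…,t. -/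
/-!
A positive semidefinite completion is the Gram matrix of vectors `u i` in `ℝⁿ` with
`⟪u i, u j⟫ = X i j` on every edge. On a clique such vectors exist because the corresponding
principal submatrix of `X` is positive semidefinite (`exists_gram_of_clique`).

A vertex set `S` of a chordal graph that is not a clique splits as `A ∪ B` with `A`, `B` proper,
`A ∩ B` a clique, and each edge inside `A` or inside `B` (`exists_clique_separation`). Here `A ∩ B`
is a minimal separator `T` of two nonadjacent vertices `a`, `b`: each vertex of `T` has neighbours
in the components of both `a` and `b`, so two nonadjacent vertices of `T` would be joined by
shortest paths through the two components, forming a chordless cycle (`adj_of_two_paths`).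

By induction `A` and `B` carry suitable vectors. On the clique `A ∩ B` both families have Gram
matrix `X`, so an isometry of `ℝⁿ` carries one to the other there (`exists_isometry_of_gram_eq`);
after applying it to the family on `B` the two families glue to one on `S`
(`exists_gram_of_chordal`).
-/

open Finset Matrix

/-! ### Induced paths and chordless cycles -/

/-- `p 0, …, p m` is a walk from `x` to `y` in the graph `E` whose interior vertices lie in `D`.
The values of `p` beyond `m` are irrelevant. -/
def IsPathSeq {V : Type*} (E : V → V → Prop) (D : V → Prop) (x y : V) (m : ℕ) (p : ℕ → V) : Prop :=
  p 0 = x ∧ p m = y ∧ (∀ i < m, E (p i) (p (i + 1))) ∧ ∀ i, 0 < i → i < m → D (p i)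

/-- Cutting out the part of a walk strictly between `p i` and `p j`, when these are adjacent. -/
lemma IsPathSeq.shortcut {V : Type*} {E : V → V → Prop} {D : V → Prop} {x y : V} {m : ℕ}
    {p : ℕ → V} (hp : IsPathSeq E D x y m p) {i j : ℕ} (hij : i + 1 < j) (hj : j ≤ m)
    (hE : E (p i) (p j)) :
    IsPathSeq E D x y (m - (j - i - 1)) (fun k => if k ≤ i then p k else p (k + (j - i - 1))) := by
  obtain ⟨h0, hm, hs, hD⟩ := hp
  refine ⟨by simpa using h0, ?_, ?_, ?_⟩
  · have h1 : ¬ (m - (j - i - 1) ≤ i) := by omega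
    have h2 : m - (j - i - 1) + (j - i - 1) = m := by omega
    simpa [h1, h2] using hm
  · intro k hk
    rcases lt_trichotomy k i with h | h | h
    · have h1 : k ≤ i := h.le
      have h2 : k + 1 ≤ i := h
      simpa [h1, h2] using hs k (by omega)
    · subst h
      have h2 : k + 1 + (j - k - 1) = j := by omega
      simpa [h2] using hE
    · have h1 : ¬ (k ≤ i) := by omega
      have h2 : ¬ (k + 1 ≤ i) := by omega
      have h3 : k + 1 + (j - i - 1) = k + (j - i - 1) + 1 := by omega
      simpa only [h1, h2, if_false, h3] using hs (k + (j - i - 1)) (by omega)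
  · intro k hk hk'
    by_cases h : k ≤ i
    · simpa [h] using hD k hk (by omega)
    · simpa [h] using hD (k + (j - i - 1)) (by omega) (by omega)

/-- A shortest walk through `D` between nonadjacent vertices outside `D` is an induced path. -/
lemma exists_induced_path {V : Type*} {E : V → V → Prop} {D : V → Prop} {x y : V}
    (h : ∃ m p, IsPathSeq E D x y m p) (hxy : x ≠ y) (hE : ¬ E x y) (hy : ¬ D y) :
    ∃ m p, IsPathSeq E D x y m p ∧ 2 ≤ m ∧
      ∀ i j, i < j → j ≤ m → p i ≠ p j ∧ (E (p i) (p j) → j = i + 1) := by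
  classical
  obtain ⟨p, hp⟩ := Nat.find_spec h
  have hmin := fun k => @Nat.find_min _ _ h k
  generalize Nat.find h = m at hp hmin
  have hchord : ∀ i j, i < j → j ≤ m → E (p i) (p j) → j = i + 1 := by
    intro i j hij hj hE'
    by_contra hne
    exact hmin (m - (j - i - 1)) (by omega) ⟨_, hp.shortcut (by omega) hj hE'⟩
  obtain ⟨h0, hm, hs, hD⟩ := hp
  refine ⟨m, p, ⟨h0, hm, hs, hD⟩, ?_, fun i j hij hj => ⟨?_, hchord i j hij hj⟩⟩
  · by_contra hlt
    have : m = 0 ∨ m = 1 := by omega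
    rcases this with rfl | rfl
    · exact hxy (h0.symm.trans hm)
    · exact hE (by simpa [h0, hm] using hs 0 one_pos)
  · intro heq
    rcases hj.eq_or_lt with rfl | hj'
    · rcases Nat.eq_zero_or_pos i with rfl | hi
      · exact hxy (h0.symm.trans (heq.trans hm))
      · exact hy (hm ▸ heq ▸ hD i hi hij)
    · -- `p i = p j` would be adjacent to `p (j + 1)`
      have := hchord i (j + 1) (by omega) hj' (heq ▸ hs j hj')
      omega

/-- In a chordal graph, two vertices joined through two disjoint, mutually nonadjacent vertex sets
are adjacent: otherwise the two induced paths close up to a chordless cycle. -/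
lemma adj_of_two_paths {V : Type*} {E : V → V → Prop} (hsymm : EdgeSymm E)
    (hch : IsChordalRel E) {D₁ D₂ : V → Prop} {x y : V} (hxy : x ≠ y)
    (hx₂ : ¬ D₂ x) (hy₁ : ¬ D₁ y)
    (hdisj : ∀ u, D₁ u → ¬ D₂ u) (hno : ∀ u v, D₁ u → D₂ v → ¬ E u v)
    (h₁ : ∃ m p, IsPathSeq E D₁ x y m p) (h₂ : ∃ m p, IsPathSeq E D₂ y x m p) : E x y := by
  by_contra hE
  obtain ⟨m, p, ⟨p0, pm, ps, pD⟩, hm, hp⟩ := exists_induced_path h₁ hxy hE hy₁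
  obtain ⟨l, q, ⟨q0, ql, qs, qD⟩, hl, hq⟩ :=
    exists_induced_path h₂ hxy.symm (fun h => hE (hsymm _ _ h)) hx₂
  set c : ℕ → V := fun i => if i < m then p i else q (i - m) with hc
  have key : ∀ i j, i < j → j < m + l →
      c i ≠ c j ∧ (E (c i) (c j) → j = i + 1 ∨ (i = 0 ∧ j + 1 = m + l)) := by
    intro i j hij hj
    by_cases hjm : j < m
    · have him : i < m := by omega
      simp only [hc, hjm, him, if_true]
      exact ⟨(hp i j hij hjm.le).1, fun h => Or.inl ((hp i j hij hjm.le).2 h)⟩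
    by_cases him : i < m
    · simp only [hc, hjm, him, if_true, if_false]
      rcases (not_lt.1 hjm).eq_or_lt with rfl | hlt
      · rw [Nat.sub_self, q0, ← pm]
        exact ⟨(hp i m hij le_rfl).1, fun h => Or.inl ((hp i m hij le_rfl).2 h)⟩
      · rcases Nat.eq_zero_or_pos i with rfl | hi
        · rw [p0, ← ql]
          have := hq (j - m) l (by omega) le_rfl
          refine ⟨this.1.symm, fun h => Or.inr ⟨rfl, ?_⟩⟩
          have := this.2 (hsymm _ _ h)
          omega
        · have h1 := pD i hi him
          have h2 := qD (j - m) (by omega) (by omega)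
          exact ⟨fun h => hdisj _ h1 (h ▸ h2), fun h => absurd h (hno _ _ h1 h2)⟩
    · simp only [hc, hjm, him, if_false]
      have := hq (i - m) (j - m) (by omega) (by omega)
      refine ⟨this.1, fun h => Or.inl ?_⟩
      have := this.2 h
      omega
  have hstep : ∀ i, i + 1 < m + l → E (c i) (c (i + 1)) := by
    intro i hi
    rcases lt_trichotomy (i + 1) m with h | h | h
    · simpa [hc, h, show i < m by omega] using ps i (by omega)
    · -- the two paths meet at `y = p m = q 0`
      have := ps i (by omega)
      rw [h, pm, ← q0] at this
      simpa [hc, h, show i < m by omega] using this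
    · have := qs (i - m) (by omega)
      rw [show i - m + 1 = i + 1 - m by omega] at this
      simpa [hc, show ¬ (i + 1 < m) by omega, show ¬ (i < m) by omega] using this
  have hlast : E (c (m + l - 1)) (c 0) := by
    have := qs (l - 1) (by omega)
    rw [show l - 1 + 1 = l by omega, ql, ← p0] at this
    simpa [hc, show ¬ (m + l - 1 < m) by omega, show m + l - 1 - m = l - 1 by omega,
      show 0 < m by omega] using this
  obtain ⟨k, hk⟩ : ∃ k, m + l = k + 4 := ⟨m + l - 4, by omega⟩
  rw [hk] at key hstep hlast
  have hsucc : ∀ i : Fin (k + 4), i.val + 1 < k + 4 → (i + 1).val = i.val + 1 := by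
    intro i hi
    exact Fin.val_add_one_of_lt' hi
  have hwrap : ∀ i : Fin (k + 4), i.val + 1 = k + 4 → (i + 1).val = 0 := by
    intro i hi
    have : i = Fin.last (k + 3) := Fin.ext (by simp; omega)
    subst this
    simp
  obtain ⟨i, j, hij, h1, h2, hadj⟩ := hch k (fun i => c i.val) (by
      intro i j h
      by_contra hne
      rcases lt_or_gt_of_ne (Fin.val_ne_of_ne hne) with hlt | hlt
      · exact (key _ _ hlt j.isLt).1 h
      · exact (key _ _ hlt i.isLt).1 h.symm) (by
      intro i
      by_cases hi : i.val + 1 < k + 4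
      · have := hstep i.val hi
        rwa [← hsucc i hi] at this
      · have hi' : i.val + 1 = k + 4 := by omega
        have := hlast
        rw [← hwrap i hi'] at this
        rwa [show k + 4 - 1 = i.val by omega] at this)
  have final : ∀ i j : Fin (k + 4), i.val < j.val → j ≠ i + 1 → i ≠ j + 1 →
      E (c i.val) (c j.val) → False := by
    intro i j hlt h1 h2 hadj
    rcases (key _ _ hlt j.isLt).2 hadj with h | ⟨h, h'⟩
    · exact h1 (Fin.ext (by rw [hsucc i (by omega), h]))
    · exact h2 (Fin.ext (by rw [hwrap j h', h]))
  rcases lt_or_gt_of_ne (Fin.val_ne_of_ne hij) with hlt | hlt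
  · exact final i j hlt h1 h2 hadj
  · exact final j i hlt h2 h1 (hsymm _ _ hadj)

/-! ### Minimal separators -/

/-- Adjacency inside the vertex set `W`; its reflexive-transitive closure is reachability in the
induced subgraph on `W`. -/
def AdjIn {V : Type*} (E : V → V → Prop) (W : Finset V) (u v : V) : Prop :=
  u ∈ W ∧ v ∈ W ∧ E u v

lemma reach_symm {V : Type*} {E : V → V → Prop} (hsymm : EdgeSymm E) {W : Finset V} {u v : V}
    (h : Relation.ReflTransGen (AdjIn E W) u v) : Relation.ReflTransGen (AdjIn E W) v u := by
  induction h with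
  | refl => exact .refl
  | tail _ h ih => exact .head ⟨h.2.1, h.1, hsymm _ _ h.2.2⟩ ih

lemma reach_mem {V : Type*} {E : V → V → Prop} {W : Finset V} {u v : V} (hu : u ∈ W)
    (h : Relation.ReflTransGen (AdjIn E W) u v) : v ∈ W := by
  induction h with
  | refl => exact hu
  | tail _ h _ => exact h.2.1

/-- Two vertices `x`, `y` with neighbours in the component of `a` are joined by a walk through that
component. -/
lemma exists_path_through {V : Type*} {E : V → V → Prop} (hsymm : EdgeSymm E) {W : Finset V}
    {a x y u v : V} (hu : Relation.ReflTransGen (AdjIn E W) a u)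
    (hv : Relation.ReflTransGen (AdjIn E W) a v) (hxu : E x u) (hyv : E y v) :
    ∃ m p, IsPathSeq E (fun w => Relation.ReflTransGen (AdjIn E W) a w) x y m p := by
  have huv := (reach_symm hsymm hu).trans hv
  -- reaching `w` from `x`, with `w` itself still in the component
  have key : ∀ w, Relation.ReflTransGen (AdjIn E W) u w → ∃ m p,
      IsPathSeq E (fun w => Relation.ReflTransGen (AdjIn E W) a w) x w m p := by
    intro w hw
    induction hw with
    | refl =>
      refine ⟨1, fun k => if k = 0 then x else u, by simp, by simp, ?_, ?_⟩
      · intro i hi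
        obtain rfl : i = 0 := by omega
        simpa using hxu
      · intro i _ _
        omega
    | @tail b w hb hbw ih =>
      obtain ⟨m, p, h0, hm, hs, hD⟩ := ih
      refine ⟨m + 1, fun k => if k ≤ m then p k else w, by simpa using h0, by simp, ?_, ?_⟩
      · intro i hi
        rcases (Nat.lt_succ_iff.1 hi).eq_or_lt with rfl | hi'
        · simpa [hm] using hbw.2.2
        · simpa [hi'.le, Nat.succ_le_of_lt hi'] using hs i hi'
      · intro i hi hi'
        rcases (Nat.lt_succ_iff.1 hi').eq_or_lt with rfl | hlt
        · simpa [hm] using hu.trans hb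
        · simpa [hlt.le] using hD i hi hlt
  obtain ⟨m, p, h0, hm, hs, hD⟩ := key v huv
  refine ⟨m + 1, fun k => if k ≤ m then p k else y, by simpa using h0, by simp, ?_, ?_⟩
  · intro i hi
    rcases (Nat.lt_succ_iff.1 hi).eq_or_lt with rfl | hi'
    · simpa [hm] using hsymm _ _ hyv
    · simpa [hi'.le, Nat.succ_le_of_lt hi'] using hs i hi'
  · intro i hi hi'
    rcases (Nat.lt_succ_iff.1 hi').eq_or_lt with rfl | hlt
    · simpa [hm] using hv
    · simpa [hlt.le] using hD i hi hlt

/-- If `T` separates `a` from `b` inside `S` but `T` without `x` does not, then `x` has a neighbour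
in the component of `a`. -/
lemma exists_adj_component {V : Type*} [DecidableEq V] {E : V → V → Prop} {S T : Finset V}
    {a b x : V} (haT : a ∈ S \ T)
    (hsep : ¬ Relation.ReflTransGen (AdjIn E (S \ T)) a b)
    (hx : Relation.ReflTransGen (AdjIn E (S \ (T.erase x))) a b) (hsymm : EdgeSymm E) :
    ∃ u, Relation.ReflTransGen (AdjIn E (S \ T)) a u ∧ E x u := by
  by_contra! hno
  apply hsep
  have : ∀ w, Relation.ReflTransGen (AdjIn E (S \ (T.erase x))) a w →
      Relation.ReflTransGen (AdjIn E (S \ T)) a w := by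
    intro w hw
    induction hw with
    | refl => exact .refl
    | @tail v w _ hvw ih =>
      have hwx : w ≠ x := fun h => hno v ih (hsymm _ _ (h ▸ hvw.2.2))
      refine ih.tail ⟨reach_mem haT ih, ?_, hvw.2.2⟩
      have := hvw.2.1
      simp only [mem_sdiff, mem_erase, not_and] at this ⊢
      exact ⟨this.1, this.2 hwx⟩
  exact this b hx

/-- Dirac's decomposition: a vertex set of a chordal graph that is not a clique is a union of two
proper subsets meeting in a clique, with every edge inside one of the two parts. -/
lemma exists_clique_separation {V : Type*} [DecidableEq V] {E : V → V → Prop}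
    (hsymm : EdgeSymm E) (hloop : HasSelfLoops E) (hch : IsChordalRel E) {S : Finset V}
    (hS : ¬ IsGraphClique E S) :
    ∃ A B : Finset V, A ⊂ S ∧ B ⊂ S ∧ A ∪ B = S ∧ IsGraphClique E (A ∩ B) ∧
      ∀ i ∈ S, ∀ j ∈ S, E i j → (i ∈ A ∧ j ∈ A) ∨ (i ∈ B ∧ j ∈ B) := by
  classical
  simp only [IsGraphClique, not_forall] at hS
  obtain ⟨a, ha, b, hb, hab⟩ := hS
  have hne : a ≠ b := fun h => hab (h ▸ hloop a)
  -- `T` is a minimal subset of `S` separating `a` from `b`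
  let P : Finset V → Prop := fun T => a ∉ T ∧ b ∉ T ∧ T ⊆ S ∧
    ¬ Relation.ReflTransGen (AdjIn E (S \ T)) a b
  have hP : ∃ T, P T := by
    refine ⟨(S.erase a).erase b, by simp, by simp,
      (erase_subset _ _).trans (erase_subset _ _), fun h => ?_⟩
    have : ∀ w, Relation.ReflTransGen (AdjIn E (S \ (S.erase a).erase b)) a w → w = a := by
      intro w hw
      induction hw with
      | refl => rfl
      | @tail v w _ h ih =>
        subst ih
        have h1 := h.2.1
        simp only [mem_sdiff, mem_erase, not_and] at h1
        by_contra hwa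
        have : w = b := by
          by_contra hwb
          exact h1.2 hwb hwa h1.1
        exact hab (this ▸ h.2.2)
    exact hne (this b h).symm
  obtain ⟨T, ⟨haT, hbT, hTS, hsep⟩, hmin⟩ : ∃ T, P T ∧ ∀ x ∈ T, ¬ P (T.erase x) := by
    obtain ⟨T, hT, hTm⟩ := WellFounded.has_min (measure (Finset.card (α := V))).wf {T | P T} hP
    exact ⟨T, hT, fun x hx h => hTm _ h (card_erase_lt_of_mem hx)⟩
  have hreach : ∀ x ∈ T, Relation.ReflTransGen (AdjIn E (S \ (T.erase x))) a b := by
    intro x hx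
    by_contra h
    exact hmin x hx ⟨fun h => haT (mem_of_mem_erase h), fun h => hbT (mem_of_mem_erase h),
      (erase_subset _ _).trans hTS, h⟩
  have ha' : a ∈ S \ T := by simp [ha, haT]
  have hb' : b ∈ S \ T := by simp [hb, hbT]
  have hnoT : ∀ {c x}, c ∈ S \ T → x ∈ T → ¬ Relation.ReflTransGen (AdjIn E (S \ T)) c x :=
    fun hc hx h => (mem_sdiff.1 (reach_mem hc h)).2 hx
  have hTclique : IsGraphClique E T := by
    intro x hx y hy
    by_cases hxy : x = y
    · exact hxy ▸ hloop x
    have hsep' : ¬ Relation.ReflTransGen (AdjIn E (S \ T)) b a := fun h => hsep (reach_symm hsymm h)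
    obtain ⟨u, hu, hxu⟩ := exists_adj_component ha' hsep (hreach x hx) hsymm
    obtain ⟨v, hv, hyv⟩ := exists_adj_component ha' hsep (hreach y hy) hsymm
    obtain ⟨u', hu', hxu'⟩ :=
      exists_adj_component hb' hsep' (reach_symm hsymm (hreach x hx)) hsymm
    obtain ⟨v', hv', hyv'⟩ :=
      exists_adj_component hb' hsep' (reach_symm hsymm (hreach y hy)) hsymm
    refine adj_of_two_paths hsymm hch hxy (hnoT hb' hx) (hnoT ha' hy) ?_ ?_
      (exists_path_through hsymm hu hv hxu hyv) (exists_path_through hsymm hv' hu' hyv' hxu')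
    · exact fun w h1 h2 => hsep (h1.trans (reach_symm hsymm h2))
    · exact fun w z h1 h2 hwz => hsep ((h1.tail ⟨reach_mem ha' h1, reach_mem hb' h2, hwz⟩).trans
        (reach_symm hsymm h2))
  -- the component of `a` together with `T`, and everything outside the component of `a`
  let K : Finset V := {w ∈ S | Relation.ReflTransGen (AdjIn E (S \ T)) a w}
  have hK : ∀ w, w ∈ K ↔ Relation.ReflTransGen (AdjIn E (S \ T)) a w := fun w => by
    simp only [K, mem_filter, and_iff_right_iff_imp]
    exact fun h => (mem_sdiff.1 (reach_mem ha' h)).1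
  have hKS : K ⊆ S := filter_subset _ _
  have hcross : ∀ i ∈ S, ∀ j ∈ S, E i j → i ∈ K → j ∈ K ∪ T := by
    intro i _ j hj hij hi
    rw [mem_union]
    by_cases hjT : j ∈ T
    · exact Or.inr hjT
    · rw [hK] at hi ⊢
      exact Or.inl (hi.tail ⟨reach_mem ha' hi, mem_sdiff.2 ⟨hj, hjT⟩, hij⟩)
  refine ⟨K ∪ T, S \ K, ?_, ?_, ?_, ?_, ?_⟩
  · refine (ssubset_iff_of_subset (union_subset hKS hTS)).2 ⟨b, hb, ?_⟩
    simp only [mem_union, hK, not_or]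
    exact ⟨hsep, hbT⟩
  · refine (ssubset_iff_of_subset sdiff_subset).2 ⟨a, ha, ?_⟩
    simp only [mem_sdiff, hK, not_and, not_not]
    exact fun _ => .refl
  · ext w
    have h1 := @hKS w
    have h2 := @hTS w
    simp only [mem_union, mem_sdiff]
    tauto
  · intro x hx y hy
    refine hTclique x ?_ y ?_
    · simp only [mem_inter, mem_union, mem_sdiff] at hx
      tauto
    · simp only [mem_inter, mem_union, mem_sdiff] at hy
      tauto
  · intro i hi j hj hij
    by_cases hiK : i ∈ K
    · exact Or.inl ⟨mem_union_left _ hiK, hcross i hi j hj hij hiK⟩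
    by_cases hjK : j ∈ K
    · exact Or.inl ⟨hcross j hj i hi (hsymm _ _ hij) hjK, mem_union_left _ hjK⟩
    · exact Or.inr ⟨mem_sdiff.2 ⟨hi, hiK⟩, mem_sdiff.2 ⟨hj, hjK⟩⟩

/-! ### Gram vectors -/

/-- Two families of vectors with equal Gram matrices on `T` differ there by a linear isometry: linear
combinations with the same coefficients have equal norms, so `v i ↦ u i` is a well-defined isometry
on the span, and it extends to the whole finite-dimensional space. -/
lemma exists_isometry_of_gram_eq {V F : Type*} [NormedAddCommGroup F] [InnerProductSpace ℝ F]
    [FiniteDimensional ℝ F] (u v : V → F) (T : Finset V)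
    (h : ∀ i ∈ T, ∀ j ∈ T, inner ℝ (u i) (u j) = inner ℝ (v i) (v j)) :
    ∃ L : F →ₗᵢ[ℝ] F, ∀ i ∈ T, L (v i) = u i := by
  classical
  let comb : (V → F) → (V → ℝ) →ₗ[ℝ] F := fun w => ∑ i ∈ T, (LinearMap.proj i).smulRight (w i)
  have hcomb : ∀ w c, comb w c = ∑ i ∈ T, c i • w i := fun w c => by simp [comb]
  have hnorm : ∀ c, ‖comb u c‖ = ‖comb v c‖ := by
    intro c
    rw [norm_eq_sqrt_real_inner, norm_eq_sqrt_real_inner]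
    congr 1
    simp only [hcomb, sum_inner, inner_sum, real_inner_smul_left, real_inner_smul_right]
    exact sum_congr rfl fun i hi => sum_congr rfl fun j hj => by rw [h j hj i hi]
  have hsingle : ∀ w, ∀ i ∈ T, comb w (Pi.single i 1) = w i := by
    intro w i hi
    rw [hcomb, sum_eq_single i]
    · simp
    · intro j _ hj
      simp [hj]
    · exact fun h => absurd hi h
  -- transport along a linear section of `comb v`
  obtain ⟨s, hs⟩ := (comb v).rangeRestrict.exists_rightInverse_of_surjective
    (LinearMap.range_eq_top.2 (comb v).surjective_rangeRestrict)
  have hs' : ∀ x, comb v (s x) = x := fun x => by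
    have := congrArg Subtype.val (LinearMap.congr_fun hs x)
    simpa using this
  let L₀ : LinearMap.range (comb v) →ₗᵢ[ℝ] F :=
    { toLinearMap := (comb u).comp s
      norm_map' := fun x => by
        rw [LinearMap.comp_apply, hnorm, hs']
        rfl }
  refine ⟨L₀.extend, fun i hi => ?_⟩
  have hmem : v i ∈ LinearMap.range (comb v) := ⟨_, hsingle v i hi⟩
  have h1 := L₀.extend_apply ⟨v i, hmem⟩
  change L₀.extend (v i) = comb u (s ⟨v i, hmem⟩) at h1
  rw [h1, ← sub_eq_zero, ← norm_eq_zero]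
  conv_lhs => rw [← hsingle u i hi, ← map_sub, hnorm, map_sub, hs', hsingle v i hi]
  simp

lemma cliqueMat_mul_mul {n : ℕ} (C : Finset (Fin n)) (X : Matrix (Fin n) (Fin n) ℝ) :
    cliqueMat C * X * (cliqueMat C)ᵀ =
      X.submatrix (fun i => (C.orderIsoOfFin rfl i : Fin n))
        (fun i => (C.orderIsoOfFin rfl i : Fin n)) := by
  ext i j
  simp only [cliqueMat, Matrix.mul_apply, Matrix.transpose_apply, Matrix.of_apply, ite_mul, mul_ite,
    one_mul, mul_one, zero_mul, mul_zero, sum_ite_eq, mem_univ, if_true, Matrix.submatrix_apply]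

open scoped MatrixOrder in
lemma exists_eq_conjTranspose_mul_self {n : ℕ} {Y : Matrix (Fin n) (Fin n) ℝ} (hY : Y.PosSemidef) :
    ∃ B : Matrix (Fin n) (Fin n) ℝ, Y = Bᴴ * B :=
  CStarAlgebra.nonneg_iff_eq_star_mul_self.mp hY.nonneg

/-- A matrix that is positive semidefinite on `C` agrees there with a Gram matrix of vectors
in `ℝⁿ`. -/
lemma exists_gram_of_clique {n : ℕ} (C : Finset (Fin n)) (X : Matrix (Fin n) (Fin n) ℝ)
    (h : (cliqueMat C * X * (cliqueMat C)ᵀ).PosSemidef) :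
    ∃ u : Fin n → EuclideanSpace ℝ (Fin n), ∀ i ∈ C, ∀ j ∈ C, inner ℝ (u i) (u j) = X i j := by
  -- extend the principal submatrix by zeros to a positive semidefinite `n × n` matrix
  have hY := h.conjTranspose_mul_mul_same (cliqueMat C)
  obtain ⟨B, hB⟩ := exists_eq_conjTranspose_mul_self hY
  refine ⟨fun i => WithLp.toLp 2 (fun k => B k i), fun i hi j hj => ?_⟩
  obtain ⟨a, ha⟩ := (C.orderIsoOfFin rfl).surjective ⟨i, hi⟩
  obtain ⟨b, hb⟩ := (C.orderIsoOfFin rfl).surjective ⟨j, hj⟩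
  have hij := congrFun (congrFun hB i) j
  rw [cliqueMat_mul_mul] at hij
  obtain rfl : (C.orderIsoOfFin rfl a : Fin n) = i := by rw [ha]
  obtain rfl : (C.orderIsoOfFin rfl b : Fin n) = j := by rw [hb]
  have hcol : ∀ a a', cliqueMat C a (C.orderIsoOfFin rfl a' : Fin n) = if a = a' then 1 else 0 := by
    intro a a'
    simp only [cliqueMat, Matrix.of_apply, Subtype.coe_inj, EmbeddingLike.apply_eq_iff_eq]
  simp only [Matrix.mul_apply, Matrix.conjTranspose_apply, hcol, Matrix.submatrix_apply,
    star_trivial, ite_mul, mul_ite, one_mul, mul_one, zero_mul, mul_zero,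
    sum_ite_eq', mem_univ, if_true] at hij
  rw [hij, PiLp.inner_apply]
  simp [mul_comm]

/-- Induction along the clique separations: vectors on the two parts are glued by rotating one
family so that both agree on the common clique. -/
lemma exists_gram_of_chordal {n : ℕ} {E : Fin n → Fin n → Prop}
    (hsymm : EdgeSymm E) (hloop : HasSelfLoops E) (hch : IsChordalRel E)
    (X : Matrix (Fin n) (Fin n) ℝ)
    (hX : ∀ D, IsGraphClique E D → ∃ u : Fin n → EuclideanSpace ℝ (Fin n),
      ∀ i ∈ D, ∀ j ∈ D, inner ℝ (u i) (u j) = X i j) (S : Finset (Fin n)) :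
    ∃ u : Fin n → EuclideanSpace ℝ (Fin n),
      ∀ i ∈ S, ∀ j ∈ S, E i j → inner ℝ (u i) (u j) = X i j := by
  induction S using Finset.strongInduction with
  | H S ih =>
    by_cases hS : IsGraphClique E S
    · obtain ⟨u, hu⟩ := hX S hS
      exact ⟨u, fun i hi j hj _ => hu i hi j hj⟩
    obtain ⟨A, B, hA, hB, -, hAB, hedge⟩ := exists_clique_separation hsymm hloop hch hS
    obtain ⟨u, hu⟩ := ih A hA
    obtain ⟨v, hv⟩ := ih B hB
    obtain ⟨L, hL⟩ := exists_isometry_of_gram_eq u v (A ∩ B) fun i hi j hj => by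
      have hE := hAB i hi j hj
      rw [mem_inter] at hi hj
      rw [hu i hi.1 j hj.1 hE, hv i hi.2 j hj.2 hE]
    have hw : ∀ i ∈ B, (if i ∈ A then u i else L (v i)) = L (v i) := by
      intro i hi
      by_cases hiA : i ∈ A
      · simp [hiA, hL i (mem_inter.2 ⟨hiA, hi⟩)]
      · simp [hiA]
    refine ⟨fun i => if i ∈ A then u i else L (v i), fun i hi j hj hij => ?_⟩
    rcases hedge i hi j hj hij with ⟨hi', hj'⟩ | ⟨hi', hj'⟩
    · simpa [hi', hj'] using hu i hi' j hj' hij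
    · simp only [hw i hi', hw j hj', L.inner_map_map]
      exact hv i hi' j hj' hij

lemma exists_maximal_clique {n : ℕ} {E : Fin n → Fin n → Prop} {D : Finset (Fin n)}
    (hD : IsGraphClique E D) : ∃ M, D ⊆ M ∧ IsMaximalGraphClique E M := by
  obtain ⟨M, hDM, hM⟩ := Finite.exists_le_maximal hD
  exact ⟨M, hDM, hM.prop, fun D' hD' h => (hM.le_of_ge hD' h).antisymm h⟩

/-- **Chordal completion theorem (Grone–Johnson–Sá–Wolkowicz).**
If `G(V,E)` is chordal with maximal cliques `C 1, …, C t`, then `X ∈ S^n(E,0)` admits a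
positive semidefinite completion iff every principal submatrix `E_{C_k} X E_{C_k}ᵀ` is
positive semidefinite. -/
theorem chordal_completion {n t : ℕ} (E : Fin n → Fin n → Prop)
    (hsymm : EdgeSymm E) (hloop : HasSelfLoops E) (hchordal : IsChordalRel E)
    (C : Fin t → Finset (Fin n)) (hinj : Function.Injective C)
    (hmax : ∀ k, IsMaximalGraphClique E (C k))
    (hall : ∀ D : Finset (Fin n), IsMaximalGraphClique E D → ∃ k, C k = D)
    (X : Matrix (Fin n) (Fin n) ℝ) (hX : HasSparsity E X) :
    HasPSDCompletion E X ↔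
      ∀ k, (cliqueMat (C k) * X * (cliqueMat (C k))ᵀ).PosSemidef := by
  constructor
  · rintro ⟨Xb, hXb, hag⟩ k
    rw [cliqueMat_mul_mul]
    have : X.submatrix (fun i => ((C k).orderIsoOfFin rfl i : Fin n))
        (fun i => ((C k).orderIsoOfFin rfl i : Fin n)) =
        Xb.submatrix (fun i => ((C k).orderIsoOfFin rfl i : Fin n))
        (fun i => ((C k).orderIsoOfFin rfl i : Fin n)) := by
      ext i j
      exact (hag _ _ ((hmax k).1 _ (Subtype.property _) _ (Subtype.property _))).symm
    rw [this]
    exact hXb.submatrix _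
  · intro h
    obtain ⟨u, hu⟩ := exists_gram_of_chordal hsymm hloop hchordal X (fun D hD => by
      obtain ⟨M, hDM, hM⟩ := exists_maximal_clique hD
      obtain ⟨k, rfl⟩ := hall M hM
      obtain ⟨u, hu⟩ := exists_gram_of_clique (C k) X (h k)
      exact ⟨u, fun i hi j hj => hu i (hDM hi) j (hDM hj)⟩) univ
    exact ⟨Matrix.gram ℝ u, Matrix.posSemidef_gram ℝ u, fun i j hij =>
      hu i (mem_univ i) j (mem_univ j) hij⟩
end

section
/- Let G(V,E) be a chordal graph on V = {1,…,n} with maximal cliques C_1,…,C_t, and let X ∈ S^n_+(E,?). Then X admits a positive semidefinite completion X̄ ∈ S^n_+ (i.e., X̄_{ij} = X_{ij} for all (i,j) ∈ E) whose rank satisfies rank(X̄) = max_{k = 1,…,t} rank(E_{C_k} X E_{C_k}^T). -/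
/-!
It suffices to write the specified entries of `X` as inner products of vectors in `ℝʳ`, where `r`
is the largest rank of a principal submatrix indexed by a maximal clique: the Gram matrix of such
vectors is a positive semidefinite completion of rank at most `r`, and the rank is at least `r`
because the clique submatrices of `X` are submatrices of any completion.

The vectors are constructed by induction on the vertex set (`exists_vectors`). On a clique, `X` is
fully specified, positive semidefinite and of rank at most `r`, hence a Gram matrix of vectors in
`ℝʳ` (`exists_gram_of_rank_le`). A vertex set which is not a clique is split into two smaller ones
that overlap in a clique and have no edge between the parts outside of the overlap
(`exists_clique_separator`, the place where chordality enters). The two families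
of vectors obtained by induction have the same Gram matrix on the overlap, so they agree there
after applying a linear isometry to one of them (`exists_isometry_of_inner_eq`), and then
they can be glued.
-/

open Finset Matrix

/-! ### Separating a chordal graph by a clique -/

/-- A walk from `z` to `y`, of length `m`, all of whose interior vertices lie in `B`,
encoded as a function on `ℕ` of which only the values on `{0, …, m}` matter. -/
def IsWalkThrough {V : Type*} (E : V → V → Prop) (B : V → Prop) (z y : V) (m : ℕ)
    (p : ℕ → V) : Prop :=
  p 0 = z ∧ p m = y ∧ (∀ i < m, E (p i) (p (i + 1))) ∧ ∀ i, 0 < i → i < m → B (p i)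

lemma exists_walkThrough {V : Type*} {E : V → V → Prop} {B : V → Prop} {u v y : V}
    (huv : Relation.ReflTransGen (fun s t => E s t ∧ B s ∧ B t) u v) (hB : B v) (hy : E v y) :
    ∀ z, E z u → ∃ m p, IsWalkThrough E B z y m p := by
  have cons : ∀ z u, B u → E z u → (∃ m p, IsWalkThrough E B u y m p) →
      ∃ m p, IsWalkThrough E B z y m p := by
    rintro z u hu hzu ⟨m, p, h0, hm, hE, hI⟩
    refine ⟨m + 1, fun k => Nat.casesOn k z p, rfl, hm, ?_, ?_⟩
    · rintro (_ | i) hi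
      · simpa [h0] using hzu
      · exact hE i (by omega)
    · rintro (_ | _ | i) h1 h2
      · omega
      · simpa [h0] using hu
      · exact hI (i + 1) (by omega) (by omega)
  induction huv using Relation.ReflTransGen.head_induction_on with
  | refl =>
    intro z hz
    refine cons z v hB hz ⟨1, fun k => Nat.casesOn k v (fun _ => y), rfl, rfl, ?_, ?_⟩
    · intro i hi
      obtain rfl : i = 0 := by omega
      exact hy
    · intros; omega
  | head h _ ih => exact fun z hz => cons z _ h.2.1 hz (ih _ h.1)

/-- In a chordal graph, two vertices `x`, `y` adjacent to `a` that are joined by a walk whose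
interior avoids the closed neighbourhood of `a` are adjacent: otherwise a shortest such walk,
closed up through `a`, is a chordless cycle of length at least 4. -/
lemma adj_of_walkThrough {V : Type*} {E : V → V → Prop}
    (hsymm : EdgeSymm E) (hloop : HasSelfLoops E) (hchordal : IsChordalRel E)
    {B : V → Prop} {a x y : V} (hBa : ∀ v, B v → ¬ E a v) (hax : E a x) (hay : E a y)
    (hxa : x ≠ a) (hya : y ≠ a) (hex : ∃ m p, IsWalkThrough E B x y m p) : E x y := by
  classical
  by_contra hxy
  obtain ⟨p, h0, hm, hE, hI⟩ := Nat.find_spec hex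
  have hmin : ∀ m' < Nat.find hex, ∀ q, ¬ IsWalkThrough E B x y m' q :=
    fun m' h q hq => Nat.find_min hex h ⟨q, hq⟩
  generalize Nat.find hex = m at *
  have hne : x ≠ y := fun h => hxy (h ▸ hloop x)
  -- By minimality the walk has no shortcut.
  have hshort : ∀ i j, i + 1 < j → j ≤ m → ¬ E (p i) (p j) := by
    intro i j hij hj hadj
    refine hmin (m - (j - i - 1)) (by omega)
      (fun k => if k ≤ i then p k else p (k + (j - i - 1))) ⟨by simpa using h0, ?_, ?_, ?_⟩
    · have h1 : ¬ m - (j - i - 1) ≤ i := by omega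
      have h2 : m - (j - i - 1) + (j - i - 1) = m := by omega
      simp only [h1, if_false, h2, hm]
    · intro k hk
      rcases lt_trichotomy k i with h | rfl | h
      · have h1 : k ≤ i := by omega
        have h2 : k + 1 ≤ i := by omega
        simpa only [h1, h2, if_true] using hE k (by omega)
      · have h1 : ¬ k + 1 ≤ k := by omega
        have h2 : k + 1 + (j - k - 1) = j := by omega
        simpa only [h1, h2, if_true, if_false, le_refl] using hadj
      · have h1 : ¬ k ≤ i := by omega
        have h2 : ¬ k + 1 ≤ i := by omega
        have h3 : k + 1 + (j - i - 1) = k + (j - i - 1) + 1 := by omega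
        simpa only [h1, h2, h3, if_false] using hE _ (by omega)
    · intro k hk hk'
      by_cases h : k ≤ i
      · simpa only [h, if_true] using hI k hk (by omega)
      · simpa only [h, if_false] using hI _ (by omega) (by omega)
  have hnotB : ∀ i ≤ m, B (p i) → 0 < i ∧ i < m := by
    intro i hi hb
    constructor
    · rcases Nat.eq_zero_or_pos i with rfl | h
      · exact absurd (h0 ▸ hax) (hBa _ hb)
      · exact h
    · rcases hi.eq_or_lt with rfl | h
      · exact absurd (hm ▸ hay) (hBa _ hb)
      · exact h
  have hpinj : ∀ i j, i < j → j ≤ m → p i ≠ p j := by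
    intro i j hij hj heq
    rcases hj.eq_or_lt with rfl | hj'
    · rcases Nat.eq_zero_or_pos i with rfl | h
      · exact hne (by rw [← h0, ← hm, heq])
      · exact absurd (hnotB j le_rfl (heq ▸ hI i h hij)).2 (lt_irrefl _)
    · exact hshort i (j + 1) (by omega) (by omega) (heq ▸ hE j hj')
  have hpa : ∀ i ≤ m, p i ≠ a := by
    intro i hi h
    rcases Nat.eq_zero_or_pos i with rfl | h'
    · exact hxa (h0 ▸ h)
    · rcases hi.eq_or_lt with rfl | h''
      · exact hya (hm ▸ h)
      · exact hBa _ (hI i h' h'') (h ▸ hloop a)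
  have hm2 : 2 ≤ m := by
    rcases m with _ | _ | m
    · exact absurd (h0.symm.trans hm) hne
    · exact absurd (by simpa [h0, hm] using hE 0 (by omega)) hxy
    · omega
  obtain ⟨k, rfl⟩ := Nat.exists_eq_add_of_le' hm2
  have hval : ∀ i : Fin (k + 4), (i + 1).val = if i.val = k + 3 then 0 else i.val + 1 := by
    intro i
    rw [Fin.val_add_one]
    simp [Fin.ext_iff]
  -- The walk closed up through `a`, a cycle of length `m + 2`.
  let c : Fin (k + 4) → V := fun i => if i.val ≤ k + 2 then p i.val else a
  have hcinj : Function.Injective c := by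
    intro i j hij
    have hi4 := i.2
    have hj4 := j.2
    dsimp only [c] at hij
    by_cases hi : i.val ≤ k + 2 <;> by_cases hj : j.val ≤ k + 2
    · simp only [hi, hj, if_true] at hij
      apply Fin.ext
      by_contra hc
      rcases lt_or_gt_of_ne hc with h | h
      · exact hpinj _ _ h hj hij
      · exact hpinj _ _ h hi hij.symm
    · simp only [hi, hj, if_true, if_false] at hij
      exact absurd hij (hpa _ hi)
    · simp only [hi, hj, if_true, if_false] at hij
      exact absurd hij.symm (hpa _ hj)
    · exact Fin.ext (by omega)
  have hcadj : ∀ i, E (c i) (c (i + 1)) := by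
    intro i
    have hi4 := i.2
    have hi1 := hval i
    dsimp only [c]
    rcases lt_trichotomy i.val (k + 2) with h | h | h
    · rw [if_neg (by omega)] at hi1
      rw [hi1, if_pos h.le, if_pos (by omega)]
      exact hE _ h
    · rw [if_neg (by omega)] at hi1
      rw [hi1, if_pos h.le, if_neg (by omega), h, hm]
      exact hsymm _ _ hay
    · rw [if_pos (by omega)] at hi1
      rw [hi1, if_neg (by omega), if_pos (by omega), h0]
      exact hax
  obtain ⟨i, j, hij, hji1, hij1, hadj⟩ := hchordal k c hcinj hcadj
  rw [Ne, Fin.ext_iff] at hij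
  rw [Ne, Fin.ext_iff, hval] at hji1 hij1
  have hi4 := i.2
  have hj4 := j.2
  by_cases hi : i.val ≤ k + 2 <;> by_cases hj : j.val ≤ k + 2
  · simp only [c, hi, hj, if_true] at hadj
    rw [if_neg (by omega)] at hji1 hij1
    rcases lt_or_gt_of_ne hij with h | h
    · exact hshort _ _ (by omega) hj hadj
    · exact hshort _ _ (by omega) hi (hsymm _ _ hadj)
  · simp only [c, hi, hj, if_true, if_false] at hadj
    rw [if_pos (by omega)] at hij1
    rw [if_neg (by omega)] at hji1
    exact hBa _ (hI i.val (by omega) (by omega)) (hsymm _ _ hadj)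
  · simp only [c, hi, hj, if_true, if_false] at hadj
    rw [if_pos (by omega)] at hji1
    rw [if_neg (by omega)] at hij1
    exact hBa _ (hI j.val (by omega) (by omega)) hadj
  · omega

/-- Two nonadjacent vertices `a`, `b` of a vertex set `S` in a chordal graph are separated by a
clique: `S` is the disjoint union of `S \ (B ∪ T)`, `T` and `B`, where `T` is a clique and no edge
joins the two outer parts, which contain `a` and `b` respectively. Here `B` is the component of `b`
in `S` after deleting the closed neighbourhood of `a`, and `T` is the set of vertices of `S`
outside `B` that are adjacent to `B`. -/
lemma exists_clique_separator {V : Type*} [DecidableEq V] {E : V → V → Prop}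
    (hsymm : EdgeSymm E) (hloop : HasSelfLoops E) (hchordal : IsChordalRel E)
    (S : Finset V) {a b : V} (ha : a ∈ S) (hb : b ∈ S) (hab : ¬ E a b) :
    ∃ B T : Finset V, B ⊆ S ∧ T ⊆ S ∧ Disjoint B T ∧ b ∈ B ∧ a ∉ B ∧ a ∉ T ∧
      IsGraphClique E T ∧ ∀ u ∈ B, ∀ v ∈ S, E u v → v ∈ B ∨ v ∈ T := by
  classical
  let P : V → Prop := Relation.ReflTransGen (fun u v => E u v ∧ v ∈ S ∧ ¬ E a v) b
  have hPS : ∀ v, P v → v ∈ S ∧ ¬ E a v := by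
    intro v hv
    rcases Relation.ReflTransGen.cases_tail hv with rfl | ⟨_, _, h⟩
    · exact ⟨hb, hab⟩
    · exact h.2
  let R : V → V → Prop := fun s t => E s t ∧ P s ∧ P t
  have hR : ∀ v, P v → Relation.ReflTransGen R b v := by
    intro v hv
    induction hv with
    | refl => exact .refl
    | tail h1 h2 ih => exact ih.tail ⟨h2.1, h1, h1.tail h2⟩
  have hRsymm : ∀ u v, Relation.ReflTransGen R u v → Relation.ReflTransGen R v u :=
    fun u v h => by
      induction h with
      | refl => exact .refl
      | tail _ h2 ih => exact ih.head ⟨hsymm _ _ h2.1, h2.2.2, h2.2.1⟩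
  have hTa : ∀ u v, P u → v ∈ S → ¬ P v → E u v → E a v := by
    intro u v hu hv hPv huv
    by_contra hav
    exact hPv (hu.tail ⟨huv, hv, hav⟩)
  refine ⟨S.filter P, S.filter (fun v => ¬ P v ∧ ∃ u, P u ∧ E u v), Finset.filter_subset _ _,
    Finset.filter_subset _ _, ?_, ?_, ?_, ?_, ?_, ?_⟩
  · rw [Finset.disjoint_left]
    intro v h1 h2
    exact (Finset.mem_filter.1 h2).2.1 (Finset.mem_filter.1 h1).2
  · exact Finset.mem_filter.2 ⟨hb, .refl⟩
  · exact fun h => (hPS a (Finset.mem_filter.1 h).2).2 (hloop a)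
  · intro h
    obtain ⟨_, _, u, hu, hua⟩ := Finset.mem_filter.1 h
    exact (hPS u hu).2 (hsymm _ _ hua)
  · intro x hx y hy
    obtain ⟨hxS, hxP, u, hu, hux⟩ := Finset.mem_filter.1 hx
    obtain ⟨hyS, hyP, v, hv, hvy⟩ := Finset.mem_filter.1 hy
    have hne : ∀ u z, P u → E u z → z ≠ a := by
      rintro u z hu huz rfl
      exact (hPS u hu).2 (hsymm _ _ huz)
    exact adj_of_walkThrough (B := P) hsymm hloop hchordal (fun v hv => (hPS v hv).2)
      (hTa u x hu hxS hxP hux) (hTa v y hv hyS hyP hvy) (hne u x hu hux) (hne v y hv hvy)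
      (exists_walkThrough ((hRsymm _ _ (hR u hu)).trans (hR v hv)) hv hvy x (hsymm _ _ hux))
  · intro u hu v hv huv
    by_cases h : P v
    · exact .inl (Finset.mem_filter.2 ⟨hv, h⟩)
    · exact .inr (Finset.mem_filter.2 ⟨hv, h, u, (Finset.mem_filter.1 hu).2, huv⟩)

/-! ### Gram vectors -/

/-- Two families of vectors with the same Gram matrix differ by a linear isometry. -/
lemma exists_isometry_of_inner_eq {ι F : Type*} [NormedAddCommGroup F] [InnerProductSpace ℝ F]
    [FiniteDimensional ℝ F] (w v : ι → F)
    (h : ∀ i j, inner ℝ (w i) (w j) = inner ℝ (v i) (v j)) :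
    ∃ L : F →ₗᵢ[ℝ] F, ∀ i, L (w i) = v i := by
  let A := Finsupp.linearCombination ℝ w
  let B := Finsupp.linearCombination ℝ v
  have hAB : ∀ c, ‖B c‖ = ‖A c‖ := by
    intro c
    have : inner ℝ (A c) (A c) = inner ℝ (B c) (B c) := by
      simp only [A, B, Finsupp.linearCombination_apply, Finsupp.sum, sum_inner, inner_sum,
        real_inner_smul_left, real_inner_smul_right, h]
    rw [real_inner_self_eq_norm_sq, real_inner_self_eq_norm_sq] at this
    exact ((sq_eq_sq₀ (norm_nonneg _) (norm_nonneg _)).1 this).symm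
  have hker : LinearMap.ker A ≤ LinearMap.ker B := by
    intro c hc
    rw [LinearMap.mem_ker] at hc ⊢
    rw [← norm_eq_zero, hAB, hc, norm_zero]
  -- The isometry on the span of `w` sends `A c` to `B c`.
  let g : LinearMap.range A →ₗ[ℝ] F :=
    ((LinearMap.ker A).liftQ B hker).comp A.quotKerEquivRange.symm.toLinearMap
  have hg : ∀ c, g ⟨A c, c, rfl⟩ = B c := by
    intro c
    have : A.quotKerEquivRange.symm ⟨A c, c, rfl⟩ = (LinearMap.ker A).mkQ c := by
      rw [LinearEquiv.symm_apply_eq]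
      rfl
    simp only [g, LinearMap.comp_apply, LinearEquiv.coe_coe, this]
    simp
  let gi : LinearMap.range A →ₗᵢ[ℝ] F := ⟨g, by
    rintro ⟨_, c, rfl⟩
    rw [hg, hAB]
    rfl⟩
  refine ⟨gi.extend, fun i => ?_⟩
  have hA : A (Finsupp.single i 1) = w i := by simp [A]
  have hB : B (Finsupp.single i 1) = v i := by simp [B]
  rw [← hA, ← hB, ← hg]
  exact LinearIsometry.extend_apply gi ⟨A (Finsupp.single i 1), _, rfl⟩

/-- A positive semidefinite matrix of rank at most `r` is a Gram matrix of vectors in `ℝʳ`. -/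
lemma exists_gram_of_rank_le {ι : Type*} [Fintype ι] {M : Matrix ι ι ℝ} (hM : M.PosSemidef)
    {r : ℕ} (hr : M.rank ≤ r) :
    ∃ w : ι → EuclideanSpace ℝ (Fin r), ∀ i j, inner ℝ (w i) (w j) = M i j := by
  obtain ⟨m, u, hu⟩ := Matrix.posSemidef_iff_eq_sum_vecMulVec.1 hM
  let A : Matrix (Fin m) ι ℝ := Matrix.of u
  have hA : M = Aᵀ * A := by
    rw [hu]
    ext i j
    simp [A, Matrix.mul_apply, Matrix.sum_apply, Matrix.vecMulVec_apply]
  -- The columns of `A` realise `M` in `ℝᵐ`, and span a subspace of dimension `rank M`.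
  let c : ι → EuclideanSpace ℝ (Fin m) := fun i => WithLp.toLp 2 (A.col i)
  let W := Submodule.span ℝ (Set.range c)
  have hW : Module.finrank ℝ W ≤ r := by
    refine le_trans (le_of_eq ?_) hr
    rw [hA, Matrix.rank_transpose_mul_self, Matrix.rank_eq_finrank_span_cols]
    have : W = (Submodule.span ℝ (Set.range A.col)).map
        (WithLp.linearEquiv 2 ℝ (Fin m → ℝ)).symm.toLinearMap := by
      rw [Submodule.map_span, ← Set.range_comp]
      rfl
    rw [this]
    exact LinearEquiv.finrank_map_eq _ _
  let b := stdOrthonormalBasis ℝ W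
  let e := EuclideanSpace.basisFun (Fin r) ℝ
  let f : W →ₗ[ℝ] EuclideanSpace ℝ (Fin r) :=
    b.toBasis.constr ℝ (fun k => e (Fin.castLE hW k))
  have hf : Orthonormal ℝ (f ∘ b.toBasis) := by
    have : f ∘ b.toBasis = e ∘ Fin.castLE hW := by
      ext1 k
      simp only [f, Function.comp_apply, Module.Basis.constr_basis]
    rw [this]
    exact e.orthonormal.comp _ (Fin.castLE_injective hW)
  let L := f.isometryOfOrthonormal (by simp) hf
  refine ⟨fun i => L ⟨c i, Submodule.subset_span ⟨i, rfl⟩⟩, fun i j => ?_⟩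
  rw [L.inner_map_map, Submodule.coe_inner, hA, Matrix.mul_apply]
  simp [c, PiLp.inner_apply, mul_comm]

/-- If each clique carries a family of vectors in `F` reproducing `X` on it, then so does each set
`S` of vertices, as far as the entries indexed by edges are concerned. If `S` is not a
clique, the families on two parts of `S` overlapping in a clique agree there up to an isometry of
`F`, and can be glued. -/
lemma exists_vectors {V F : Type*} [NormedAddCommGroup F] [InnerProductSpace ℝ F]
    [FiniteDimensional ℝ F] {E : V → V → Prop} (hsymm : EdgeSymm E) (hloop : HasSelfLoops E)
    (hchordal : IsChordalRel E) (X : Matrix V V ℝ)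
    (hclique : ∀ K : Finset V, IsGraphClique E K →
      ∃ v : V → F, ∀ i ∈ K, ∀ j ∈ K, inner ℝ (v i) (v j) = X i j) (S : Finset V) :
    ∃ v : V → F, ∀ i ∈ S, ∀ j ∈ S, E i j → inner ℝ (v i) (v j) = X i j := by
  classical
  induction S using Finset.strongInduction with
  | H S ih =>
  by_cases hS : IsGraphClique E S
  · obtain ⟨v, hv⟩ := hclique S hS
    exact ⟨v, fun i hi j hj _ => hv i hi j hj⟩
  simp only [IsGraphClique, not_forall] at hS
  obtain ⟨a, ha, b, hb, hab⟩ := hS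
  obtain ⟨B, T, hBS, hTS, hBT, hbB, haB, haT, hT, hsep⟩ :=
    exists_clique_separator hsymm hloop hchordal S ha hb hab
  obtain ⟨v₁, hv₁⟩ := ih (B ∪ T) ((Finset.ssubset_iff_of_subset (Finset.union_subset hBS hTS)).2
    ⟨a, ha, by simp [haB, haT]⟩)
  obtain ⟨v₂, hv₂⟩ := ih (S \ B) ((Finset.ssubset_iff_of_subset Finset.sdiff_subset).2
    ⟨b, hb, by simp [hbB]⟩)
  have hT₂ : ∀ i ∈ T, i ∈ S \ B := fun i hi =>
    Finset.mem_sdiff.2 ⟨hTS hi, Finset.disjoint_right.1 hBT hi⟩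
  have hT₁ : ∀ i ∈ T, i ∈ B ∪ T := fun i hi => Finset.mem_union_right _ hi
  have hB₁ : ∀ i ∈ B, i ∈ B ∪ T := fun i hi => Finset.mem_union_left _ hi
  obtain ⟨L, hL⟩ := exists_isometry_of_inner_eq (fun i : T => v₁ i) (fun i : T => v₂ i)
    (fun i j => (hv₁ i (hT₁ i i.2) j (hT₁ j j.2) (hT i i.2 j j.2)).trans
      (hv₂ i (hT₂ i i.2) j (hT₂ j j.2) (hT i i.2 j j.2)).symm)
  -- On `T` it does not matter which of the two families is used.
  have key : ∀ i ∈ B, ∀ j ∈ T, E i j → inner ℝ (L (v₁ i)) (v₂ j) = X i j := by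
    intro i hi j hj hij
    rw [← hL ⟨j, hj⟩, L.inner_map_map]
    exact hv₁ i (hB₁ i hi) j (hT₁ j hj) hij
  have key' : ∀ i ∈ B, ∀ j ∈ T, E j i → inner ℝ (v₂ j) (L (v₁ i)) = X j i := by
    intro i hi j hj hij
    rw [← hL ⟨j, hj⟩, L.inner_map_map]
    exact hv₁ j (hT₁ j hj) i (hB₁ i hi) hij
  refine ⟨fun i => if i ∈ B then L (v₁ i) else v₂ i, fun i hi j hj hij => ?_⟩
  by_cases hiB : i ∈ B <;> by_cases hjB : j ∈ B <;> simp only [hiB, hjB, if_true, if_false]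
  · rw [L.inner_map_map]
    exact hv₁ i (hB₁ i hiB) j (hB₁ j hjB) hij
  · exact key i hiB j ((hsep i hiB j hj hij).resolve_left hjB) hij
  · exact key' j hjB i ((hsep j hjB i hi (hsymm _ _ hij)).resolve_left hiB) hij
  · exact hv₂ i (Finset.mem_sdiff.2 ⟨hi, hiB⟩) j (Finset.mem_sdiff.2 ⟨hj, hjB⟩) hij

lemma cliqueMat_mul_mul_apply {n : ℕ} (C : Finset (Fin n)) (X : Matrix (Fin n) (Fin n) ℝ)
    (i j : Fin C.card) :
    (cliqueMat C * X * (cliqueMat C)ᵀ) i j = X (C.orderIsoOfFin rfl i) (C.orderIsoOfFin rfl j) := by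
  simp only [cliqueMat, Matrix.mul_apply, Matrix.transpose_apply, Matrix.of_apply, ite_mul, mul_ite,
    one_mul, mul_one, zero_mul, mul_zero, Finset.sum_ite_eq, Finset.mem_univ, if_true]

lemma exists_maximal_clique_ge {V : Type*} [Finite V] {E : V → V → Prop} {K : Finset V}
    (hK : IsGraphClique E K) : ∃ D, K ⊆ D ∧ IsMaximalGraphClique E D := by
  obtain ⟨D, hKD, hD⟩ := (Set.toFinite {D : Finset V | IsGraphClique E D}).exists_le_maximal hK
  exact ⟨D, hKD, hD.1, fun D' hD' h => (hD.eq_of_le hD' h).symm⟩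

/-- **Minimum-rank positive semidefinite completion (Dancis).**
If `G(V,E)` is chordal with maximal cliques `C 1, …, C t` and `X ∈ S^n_+(E,?)`, then there
is a positive semidefinite completion `X̄` of `X` whose rank equals the maximum rank of the
principal submatrices `E_{C_k} X E_{C_k}ᵀ`. -/
theorem chordal_min_rank_completion {n t : ℕ} (E : Fin n → Fin n → Prop)
    (hsymm : EdgeSymm E) (hloop : HasSelfLoops E) (hchordal : IsChordalRel E)
    (C : Fin t → Finset (Fin n)) (hinj : Function.Injective C)
    (hmax : ∀ k, IsMaximalGraphClique E (C k))
    (hall : ∀ D : Finset (Fin n), IsMaximalGraphClique E D → ∃ k, C k = D)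
    (X : Matrix (Fin n) (Fin n) ℝ) (hX : HasSparsity E X)
    (hcomp : HasPSDCompletion E X) :
    ∃ Xb : Matrix (Fin n) (Fin n) ℝ, Xb.PosSemidef ∧ (∀ i j, E i j → Xb i j = X i j) ∧
      Xb.rank = Finset.univ.sup fun k => (cliqueMat (C k) * X * (cliqueMat (C k))ᵀ).rank := by

  classical
  obtain ⟨Y, hY, hYX⟩ := hcomp
  set r := Finset.univ.sup fun k => (cliqueMat (C k) * X * (cliqueMat (C k))ᵀ).rank with hr
  -- A principal submatrix indexed by a clique only involves specified entries.
  have hsub : ∀ Z : Matrix (Fin n) (Fin n) ℝ, (∀ i j, E i j → Z i j = X i j) → ∀ k,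
      cliqueMat (C k) * X * (cliqueMat (C k))ᵀ = cliqueMat (C k) * Z * (cliqueMat (C k))ᵀ := by
    intro Z hZ k
    ext i j
    rw [cliqueMat_mul_mul_apply, cliqueMat_mul_mul_apply]
    exact (hZ _ _ ((hmax k).1 _ (Subtype.coe_prop _) _ (Subtype.coe_prop _))).symm
  obtain ⟨v, hv⟩ := exists_vectors (F := EuclideanSpace ℝ (Fin r)) hsymm hloop hchordal X (by
    intro K hK
    obtain ⟨D, hKD, hD⟩ := exists_maximal_clique_ge hK
    obtain ⟨k, rfl⟩ := hall D hD
    have hpsd : (cliqueMat (C k) * X * (cliqueMat (C k))ᵀ).PosSemidef := by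
      rw [hsub Y hYX k]
      simpa [Matrix.conjTranspose_eq_transpose_of_trivial] using
        hY.mul_mul_conjTranspose_same (cliqueMat (C k))
    obtain ⟨w, hw⟩ := exists_gram_of_rank_le hpsd (r := r)
      (Finset.le_sup (f := fun k => (cliqueMat (C k) * X * (cliqueMat (C k))ᵀ).rank)
        (Finset.mem_univ k))
    refine ⟨fun i => if h : i ∈ C k then w (((C k).orderIsoOfFin rfl).symm ⟨i, h⟩) else 0, ?_⟩
    intro i hi j hj
    simp only [hKD hi, hKD hj, dif_pos, hw, cliqueMat_mul_mul_apply, OrderIso.apply_symm_apply])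
    Finset.univ
  have hZ : ∀ i j, E i j → Matrix.gram ℝ v i j = X i j := fun i j hij =>
    hv i (Finset.mem_univ i) j (Finset.mem_univ j) hij
  refine ⟨Matrix.gram ℝ v, Matrix.posSemidef_gram ℝ v, hZ, le_antisymm ?_ ?_⟩
  · let A : Matrix (Fin r) (Fin n) ℝ := Matrix.of fun k i => v i k
    have hA : Matrix.gram ℝ v = Aᵀ * A := by
      ext i j
      simp [A, Matrix.mul_apply, PiLp.inner_apply, mul_comm]
    rw [hA]
    exact (Matrix.rank_mul_le_right _ _).trans (Matrix.rank_le_height A)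
  · refine Finset.sup_le fun k _ => ?_
    rw [hsub _ hZ k]
    exact (Matrix.rank_mul_le_left _ _).trans (Matrix.rank_mul_le_right _ _)
end

section
/- For any undirected graph G(V,E) on V = {1,…,n}, the cones S^n_+(E,?) and S^n_+(E,0) are dual to each other within the space S^n(E,0) with respect to the trace inner product: {Z ∈ S^n(E,0) : trace(XZ) ≥ 0 for all X ∈ S^n_+(E,?)} = S^n_+(E,0). -/
/-!
If `Z` has sparsity pattern `E`, then `trace (X * Z)` depends only on the entries of `X` indexed by
`E`, so `X` may be replaced by any of its completions (`trace_mul_eq_of_agree`). The claim thus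
reduces to self-duality of the positive semidefinite cone: the trace of a product of two positive
semidefinite matrices is nonnegative because one factor is a sum of matrices `v vᵀ`, and conversely
testing `Z` against the projection of `v vᵀ` onto the pattern gives `0 ≤ vᵀ Z v`.
-/

open Finset Matrix

/-- Against a matrix with sparsity pattern `E`, the trace pairing sees only entries on `E`. -/
lemma trace_mul_eq_of_agree {n : ℕ} {E : Fin n → Fin n → Prop}
    {X Y Z : Matrix (Fin n) (Fin n) ℝ} (hZ : HasSparsity E Z)
    (h : ∀ i j, E i j → Y i j = X i j) :
    Matrix.trace (X * Z) = Matrix.trace (Y * Z) := by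
  simp only [Matrix.trace, Matrix.diag, Matrix.mul_apply]
  refine Finset.sum_congr rfl fun i _ => Finset.sum_congr rfl fun j _ => ?_
  by_cases hE : E i j
  · rw [h i j hE]
  · have hz : Z j i = 0 := by rw [hZ.1.apply i j, hZ.2 i j hE]
    rw [hz, mul_zero, mul_zero]

lemma trace_mul_vecMulVec_self {n : ℕ} (M : Matrix (Fin n) (Fin n) ℝ) (v : Fin n → ℝ) :
    Matrix.trace (M * vecMulVec v (star v)) = star v ⬝ᵥ M *ᵥ v := by
  rw [Matrix.mul_vecMulVec, Matrix.trace_vecMulVec, dotProduct_comm]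

lemma trace_mul_nonneg_of_posSemidef {n : ℕ} {X Z : Matrix (Fin n) (Fin n) ℝ}
    (hX : X.PosSemidef) (hZ : Z.PosSemidef) : 0 ≤ Matrix.trace (X * Z) := by
  obtain ⟨m, v, rfl⟩ := Matrix.posSemidef_iff_eq_sum_vecMulVec.mp hZ
  rw [Finset.mul_sum, Matrix.trace_sum]
  refine Finset.sum_nonneg fun i _ => ?_
  rw [trace_mul_vecMulVec_self]
  exact hX.dotProduct_mulVec_nonneg (v i)

/-- **Duality of the sparse PSD cone and the PSD-completable cone.**
For any undirected graph `G(V,E)`, within the space `S^n(E,0)` with the trace inner product,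
the dual cone of `S^n_+(E,?)` is `S^n_+(E,0)`. -/
theorem sparse_cone_duality {n : ℕ} (E : Fin n → Fin n → Prop)
    (hsymm : EdgeSymm E) (hloop : HasSelfLoops E) :
    {Z : Matrix (Fin n) (Fin n) ℝ | HasSparsity E Z ∧
        ∀ X : Matrix (Fin n) (Fin n) ℝ, HasSparsity E X → HasPSDCompletion E X →
          0 ≤ Matrix.trace (X * Z)} =
      {Z : Matrix (Fin n) (Fin n) ℝ | HasSparsity E Z ∧ Z.PosSemidef} := by
  classical
  ext Z
  refine and_congr_right fun hZ => ⟨fun hdual => ?_, ?_⟩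
  · refine Matrix.PosSemidef.of_dotProduct_mulVec_nonneg ?_ fun v => ?_
    · rw [Matrix.IsHermitian, Matrix.conjTranspose_eq_transpose_of_trivial]
      exact hZ.1
    · let X : Matrix (Fin n) (Fin n) ℝ :=
        Matrix.of fun i j => if E i j then v i * v j else 0
      have hagree : ∀ i j, E i j → vecMulVec v (star v) i j = X i j := by
        intro i j hE
        simp [X, hE, vecMulVec_apply]
      have hX : HasSparsity E X := by
        refine ⟨Matrix.IsSymm.ext fun i j => ?_, fun i j hE => by simp [X, hE]⟩
        have hiff : E j i ↔ E i j := ⟨hsymm j i, hsymm i j⟩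
        simp [X, hiff, mul_comm]
      have key := hdual X hX ⟨_, Matrix.posSemidef_vecMulVec_self_star v, hagree⟩
      rwa [trace_mul_eq_of_agree hZ hagree, Matrix.trace_mul_comm,
        trace_mul_vecMulVec_self] at key
  · rintro hpos X - ⟨Y, hY, hagree⟩
    rw [trace_mul_eq_of_agree hZ hagree]
    exact trace_mul_nonneg_of_posSemidef hY hpos
end
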